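/- For every integer k ≥ 6, the quotient of the Nielsen class Ni(A6, C_{2×2}^k) by the equivalence relation generated by the Hurwitz moves together with simultaneous conjugation of all entries by a single element of the symmetric group S6 has exactly two equivalence classes. -/

import Mathlib

/-- The `i`-th Hurwitz move on `k`-tuples of elements of a group `G`:
`(g₁,…,gₖ) ↦ (g₁,…,g_{i-1}, g_{i+1}, g_{i+1}⁻¹ g_i g_{i+1}, g_{i+2},…,gₖ)`. -/
def HurwitzMove {G : Type*} [Group G] {k : ℕ} (g h : Fin k → G) : Prop :=
  ∃ i : ℕ, ∃ hi : i + 1 < k,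
    h ⟨i, Nat.lt_of_succ_lt hi⟩ = g ⟨i + 1, hi⟩ ∧
    h ⟨i + 1, hi⟩ = (g ⟨i + 1, hi⟩)⁻¹ * g ⟨i, Nat.lt_of_succ_lt hi⟩ * g ⟨i + 1, hi⟩ ∧
    ∀ j : Fin k, (j : ℕ) ≠ i → (j : ℕ) ≠ i + 1 → h j = g j

/-- Hurwitz equivalence: the equivalence relation generated by the Hurwitz moves. -/
def HurwitzEquiv {G : Type*} [Group G] {k : ℕ} (g h : Fin k → G) : Prop :=
  Relation.EqvGen HurwitzMove g h

/-- The Nielsen class `Ni(A₆, C_{2×2}^k)`: `k`-tuples of order-2 elements of `A₆`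
(products of two disjoint transpositions) with product `1` generating `A₆`. -/
def NielsenSet (k : ℕ) : Set (Fin k → Equiv.Perm (Fin 6)) :=
  {g | (∀ i, g i ∈ alternatingGroup (Fin 6)) ∧ (∀ i, orderOf (g i) = 2) ∧
       (List.ofFn g).prod = 1 ∧
       Subgroup.closure (Set.range g) = alternatingGroup (Fin 6)}

/-- One step of the absolute equivalence: a Hurwitz move, or simultaneous
conjugation of all entries by a single element of `S₆`. -/
def AbsRel (k : ℕ) (g h : Fin k → Equiv.Perm (Fin 6)) : Prop :=
  HurwitzMove g h ∨ ∃ s : Equiv.Perm (Fin 6), h = fun i => s⁻¹ * g i * s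

/-- One step of the inner equivalence: a Hurwitz move, or simultaneous
conjugation of all entries by a single element of `A₆`. -/
def InnerRel (k : ℕ) (g h : Fin k → Equiv.Perm (Fin 6)) : Prop :=
  HurwitzMove g h ∨
    ∃ s ∈ alternatingGroup (Fin 6), h = fun i => s⁻¹ * g i * s

/-- The set of fixed points of a permutation. -/
def FixedPts {n : ℕ} (g : Equiv.Perm (Fin n)) : Set (Fin n) := {x | g x = x}

/-!
The double transpositions of six letters lift to involutions of the Valentiner group `3.A₆`. The
product of these lifts over the entries of a tuple is unchanged by Hurwitz moves, and for a tuple of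
the Nielsen class it lies in the centre, of order three.

This invariant is complete. Every generating tuple can be moved to one whose last three entries are
admissible, in terms of the lifted products of suffixes, and is then admissible as a whole. For a
given lifted product, the first entries of the admissible tuples form a graph whose edges are
realized by Hurwitz moves. The graph is connected, so that induction on the length shows that
admissible tuples with the same lifted product are equivalent. From length six on, admissibility is
no condition on the product, which leaves finitely many graphs to check.

Conjugation by an odd permutation swaps the two nontrivial central elements, so that all tuples with
nontrivial lifted product form a single class.
-/

section HurwitzLists

variable {G : Type*} [Group G]

/-- A Hurwitz move on a tuple written as a list. -/
inductive HurwitzStep : List G → List G → Prop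
  | swap (u : List G) (a b : G) (v : List G) :
      HurwitzStep (u ++ a :: b :: v) (u ++ b :: (b⁻¹ * a * b) :: v)

/-- Hurwitz equivalence of tuples written as lists. -/
def HurwitzListEquiv : List G → List G → Prop := Relation.EqvGen HurwitzStep

namespace HurwitzListEquiv

theorem refl (l : List G) : HurwitzListEquiv l l := Relation.EqvGen.refl l

theorem symm {l m : List G} (h : HurwitzListEquiv l m) : HurwitzListEquiv m l :=
  Relation.EqvGen.symm _ _ h

theorem trans {l m n : List G} (h₁ : HurwitzListEquiv l m) (h₂ : HurwitzListEquiv m n) :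
    HurwitzListEquiv l n :=
  Relation.EqvGen.trans _ _ _ h₁ h₂

theorem swap (a b : G) (v : List G) :
    HurwitzListEquiv (a :: b :: v) (b :: (b⁻¹ * a * b) :: v) :=
  .rel _ _ (.swap [] a b v)

theorem swap_inv (a b : G) (v : List G) :
    HurwitzListEquiv (a :: b :: v) ((a * b * a⁻¹) :: a :: v) := by
  simpa [mul_assoc] using (swap (a * b * a⁻¹) a v).symm

theorem iff_of_step {p : List G → Prop} (hp : ∀ {l m}, HurwitzStep l m → (p l ↔ p m))
    {l m : List G} (h : HurwitzListEquiv l m) : p l ↔ p m := by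
  induction h with
  | rel _ _ h => exact hp h
  | refl => rfl
  | symm _ _ _ ih => exact ih.symm
  | trans _ _ _ _ _ ih₁ ih₂ => exact ih₁.trans ih₂

theorem length_eq {l m : List G} (h : HurwitzListEquiv l m) : l.length = m.length := by
  refine (h.iff_of_step (p := fun n => l.length = n.length) fun h => ?_).1 rfl
  cases h; simp

theorem map_of_step {f : List G → List G}
    (hf : ∀ u a b v,
      HurwitzListEquiv (f (u ++ a :: b :: v)) (f (u ++ b :: (b⁻¹ * a * b) :: v)))
    {l m : List G} (h : HurwitzListEquiv l m) : HurwitzListEquiv (f l) (f m) := by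
  induction h with
  | rel _ _ h => cases h with | swap u a b v => exact hf u a b v
  | refl => exact refl _
  | symm _ _ _ ih => exact ih.symm
  | trans _ _ _ _ _ ih₁ ih₂ => exact ih₁.trans ih₂

theorem cons (a : G) {l m : List G} (h : HurwitzListEquiv l m) :
    HurwitzListEquiv (a :: l) (a :: m) :=
  h.map_of_step fun u b c v => .rel _ _ (.swap (a :: u) b c v)

theorem append_left (u : List G) {l m : List G} (h : HurwitzListEquiv l m) :
    HurwitzListEquiv (u ++ l) (u ++ m) := by
  induction u with
  | nil => exact h
  | cons a u ih => exact ih.cons a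

theorem append_right (v : List G) {l m : List G} (h : HurwitzListEquiv l m) :
    HurwitzListEquiv (l ++ v) (m ++ v) :=
  h.map_of_step (f := (· ++ v)) fun u b c w => by
    simpa using (swap b c (w ++ v)).append_left u

theorem closure_eq {l m : List G} (h : HurwitzListEquiv l m) :
    Subgroup.closure {g | g ∈ l} = Subgroup.closure {g | g ∈ m} := by
  have mem_iff (H : Subgroup G) : (∀ g ∈ l, g ∈ H) ↔ ∀ g ∈ m, g ∈ H := by
    refine h.iff_of_step (p := fun n => ∀ g ∈ n, g ∈ H) ?_
    rintro _ _ ⟨u, a, b, v⟩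
    have hconj : b ∈ H → (b⁻¹ * a * b ∈ H ↔ a ∈ H) := fun hb => by
      rw [H.mul_mem_cancel_right hb, H.mul_mem_cancel_left (H.inv_mem hb)]
    simp only [List.mem_append, List.mem_cons, or_imp, forall_and, forall_eq]
    tauto
  exact le_antisymm
    ((Subgroup.closure_le _).2 ((mem_iff _).2 fun _ hg => Subgroup.subset_closure hg))
    ((Subgroup.closure_le _).2 ((mem_iff _).1 fun _ hg => Subgroup.subset_closure hg))

theorem forall_mem_iff {C : Set G} (hC : ∀ c d, d⁻¹ * c * d ∈ C ↔ c ∈ C) {l m : List G}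
    (h : HurwitzListEquiv l m) : (∀ c ∈ l, c ∈ C) ↔ ∀ c ∈ m, c ∈ C := by
  refine h.iff_of_step (p := fun n => ∀ c ∈ n, c ∈ C) ?_
  rintro _ _ ⟨u, a, b, v⟩
  simp only [List.mem_append, List.mem_cons, or_imp, forall_and, forall_eq, hC]
  tauto

theorem append_comm_conj (u v : List G) :
    HurwitzListEquiv (u ++ v) (v ++ u.map fun g => v.prod⁻¹ * g * v.prod) := by
  induction v generalizing u with
  | nil => simpa using refl u
  | cons b v ih =>
    have move : ∀ u : List G, HurwitzListEquiv (u ++ b :: v)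
        (b :: (u.map fun g => b⁻¹ * g * b) ++ v) := by
      intro u
      induction u with
      | nil => exact refl _
      | cons a u ihu => exact (ihu.cons a).trans (swap a b _)
    refine (move u).trans ?_
    simpa [mul_assoc, Function.comp_def] using (ih (u.map fun g => b⁻¹ * g * b)).cons b

theorem exists_append_comm (u v : List G) : ∃ w, HurwitzListEquiv (u ++ v) (w ++ u) :=
  ⟨v.map fun g => u.prod * g * u.prod⁻¹, by
    simpa [mul_assoc, Function.comp_def] using
      (append_comm_conj (v.map fun g => u.prod * g * u.prod⁻¹) u).symm⟩

theorem exists_append_of_sublist {s l : List G} (h : s.Sublist l) :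
    ∃ m, HurwitzListEquiv l (s ++ m) := by
  induction h with
  | slnil => exact ⟨[], refl _⟩
  | @cons s l a _ ih =>
    obtain ⟨m, hm⟩ := ih
    refine ⟨(s.prod⁻¹ * a * s.prod) :: m, (hm.cons a).trans ?_⟩
    simpa using (append_comm_conj [a] s).append_right m
  | @cons_cons s l a _ ih =>
    obtain ⟨m, hm⟩ := ih
    exact ⟨m, hm.cons a⟩

theorem exists_append_right_of_sublist {s l : List G} (h : s.Sublist l) :
    ∃ m, HurwitzListEquiv l (m ++ s) := by
  obtain ⟨v, hv⟩ := exists_append_of_sublist h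
  obtain ⟨m, hm⟩ := exists_append_comm s v
  exact ⟨m, hv.trans hm⟩

theorem map_conj (s : G) {l m : List G} (h : HurwitzListEquiv l m) :
    HurwitzListEquiv (l.map fun g => s⁻¹ * g * s) (m.map fun g => s⁻¹ * g * s) :=
  h.map_of_step fun u a b v => by
    simpa [mul_assoc] using (swap (s⁻¹ * a * s) (s⁻¹ * b * s)
      (v.map fun g => s⁻¹ * g * s)).append_left (u.map fun g => s⁻¹ * g * s)

end HurwitzListEquiv

end HurwitzLists

section FiberTower

variable {G K : Type*}

/-- A list of elements of `C` is admissible when the lifted product of each of its nonempty suffixes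
`u` lies in the prescribed level `S u.length`. -/
def IsAdmissible [Monoid K] (ρ : G → K) (C : Set G) (S : ℕ → Set K) : List G → Prop
  | [] => True
  | c :: u => c ∈ C ∧ ((c :: u).map ρ).prod ∈ S (u.length + 1) ∧ IsAdmissible ρ C S u

/-- The edge from a possible first entry `d` of an admissible list of length `n + 2` with lifted
product `p` to a possible second entry `y`, which a Hurwitz move then brings to the front. -/
def FiberEdge [Group K] (ρ : G → K) (C : Set G) (S : ℕ → Set K) (n : ℕ) (p : K)
    (d y : G) : Prop :=
  y ∈ C ∧ (ρ y)⁻¹ * p ∈ S (n + 1) ∧ (ρ y)⁻¹ * (ρ d)⁻¹ * p ∈ S n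

variable {ρ : G → K} {C : Set G} {S : ℕ → Set K}

theorem IsAdmissible.prod_mem [Monoid K] {l : List G} (hl : IsAdmissible ρ C S l) {n : ℕ}
    (hlen : l.length = n + 1) : (l.map ρ).prod ∈ S (n + 1) := by
  cases l with
  | nil => simp at hlen
  | cons c u => rw [← Nat.succ.inj hlen]; exact hl.2.1

theorem IsAdmissible.mem [Monoid K] {l : List G} (hl : IsAdmissible ρ C S l) :
    ∀ c ∈ l, c ∈ C := by
  induction l with
  | nil => simp
  | cons c u ih => exact List.forall_mem_cons.2 ⟨hl.1, ih hl.2.2⟩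

/-- Levels `S n` for which the first entries of the admissible lists with a given lifted product
form a connected graph. Admissible lists of the same length and lifted product are then Hurwitz
equivalent. -/
structure IsFiberTower [Group G] [Group K] (ρ : G → K) (C : Set G) (S : ℕ → Set K) : Prop where
  conj_mem : ∀ c ∈ C, ∀ d ∈ C, d⁻¹ * c * d ∈ C
  map_conj : ∀ c ∈ C, ∀ d ∈ C, ρ (d⁻¹ * c * d) = (ρ d)⁻¹ * ρ c * ρ d
  injOn : Set.InjOn ρ C
  level_zero : ∀ p ∈ S 0, p = 1
  level_one : ∀ p ∈ S 1, ∃ c ∈ C, ρ c = p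
  connected : ∀ n, ∀ p ∈ S (n + 2), ∃ d ∈ C, (ρ d)⁻¹ * p ∈ S (n + 1) ∧
    ∀ e ∈ C, (ρ e)⁻¹ * p ∈ S (n + 1) → Relation.ReflTransGen (FiberEdge ρ C S n p) d e

variable [Group G] [Group K]

namespace IsFiberTower

theorem exists_isAdmissible (h : IsFiberTower ρ C S) :
    ∀ (n : ℕ) {p : K}, p ∈ S n → ∃ l, IsAdmissible ρ C S l ∧ l.length = n ∧ (l.map ρ).prod = p
  | 0, p, hp => ⟨[], trivial, rfl, (h.level_zero p hp).symm⟩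
  | 1, p, hp => by
    obtain ⟨c, hc, rfl⟩ := h.level_one p hp
    exact ⟨[c], ⟨hc, by simpa using hp, trivial⟩, rfl, by simp⟩
  | n + 2, p, hp => by
    obtain ⟨d, hd, hdp, -⟩ := h.connected n p hp
    obtain ⟨u, hu, hlen, hprod⟩ := exists_isAdmissible h (n + 1) hdp
    have hcons : ((d :: u).map ρ).prod = p := by simp [hprod]
    exact ⟨d :: u, ⟨hd, by rwa [hcons, hlen], hu⟩, by simp [hlen], hcons⟩

/-- The first entries of equivalent admissible lists with lifted product `p` spread along edges:
rewrite the tail so that it starts with `y`, then swap. -/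
theorem exists_cons_of_edge (h : IsFiberTower ρ C S) {n : ℕ} {p : K} {d y : G}
    (ih : ∀ l m, IsAdmissible ρ C S l → IsAdmissible ρ C S m → l.length = n + 1 →
      m.length = n + 1 → (l.map ρ).prod = (m.map ρ).prod → HurwitzListEquiv l m)
    (hdy : FiberEdge ρ C S n p d y) {u : List G} (hu : IsAdmissible ρ C S (d :: u))
    (hlen : u.length = n + 1) (hprod : ((d :: u).map ρ).prod = p) :
    ∃ w, IsAdmissible ρ C S (y :: w) ∧ w.length = n + 1 ∧ ((y :: w).map ρ).prod = p ∧
      HurwitzListEquiv (d :: u) (y :: w) := by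
  obtain ⟨hy, hyp, hydp⟩ := hdy
  obtain ⟨hd, hp, hu⟩ := hu
  obtain ⟨v, hv, hvlen, hvprod⟩ := h.exists_isAdmissible n hydp
  have huprod : (u.map ρ).prod = (ρ d)⁻¹ * p := by simp [← hprod]
  have hyv : ((y :: v).map ρ).prod = (u.map ρ).prod := by simp [hvprod, huprod, mul_assoc]
  have hyv_adm : IsAdmissible ρ C S (y :: v) := by
    refine ⟨hy, ?_, hv⟩
    rw [hyv, hvlen]
    exact hu.prod_mem hlen
  have hconj : ((y⁻¹ * d * y :: v).map ρ).prod = (ρ y)⁻¹ * p := by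
    rw [List.map_cons, List.prod_cons, h.map_conj d hd y hy, hvprod]
    group
  have hall : ((y :: (y⁻¹ * d * y) :: v).map ρ).prod = p := by
    rw [List.map_cons, List.prod_cons, hconj, mul_inv_cancel_left]
  refine ⟨(y⁻¹ * d * y) :: v, ⟨hy, ?_, h.conj_mem d hd y hy, ?_, hv⟩, by simp [hvlen], hall, ?_⟩
  · rw [hall]; simpa [← hprod, hvlen, hlen] using hp
  · rwa [hconj, hvlen]
  · exact ((ih u (y :: v) hu hyv_adm hlen (by simp [hvlen]) hyv.symm).cons d).trans (.swap d y v)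

theorem exists_cons_of_reflTransGen (h : IsFiberTower ρ C S) {n : ℕ} {p : K} {d e : G}
    (ih : ∀ l m, IsAdmissible ρ C S l → IsAdmissible ρ C S m → l.length = n + 1 →
      m.length = n + 1 → (l.map ρ).prod = (m.map ρ).prod → HurwitzListEquiv l m)
    (hde : Relation.ReflTransGen (FiberEdge ρ C S n p) d e) {u : List G}
    (hu : IsAdmissible ρ C S (d :: u)) (hlen : u.length = n + 1)
    (hprod : ((d :: u).map ρ).prod = p) :
    ∃ w, IsAdmissible ρ C S (e :: w) ∧ w.length = n + 1 ∧ ((e :: w).map ρ).prod = p ∧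
      HurwitzListEquiv (d :: u) (e :: w) := by
  induction hde with
  | refl => exact ⟨u, hu, hlen, hprod, .refl _⟩
  | tail _ hyz ihy =>
    obtain ⟨v, hv, hvlen, hvprod, hequiv⟩ := ihy
    obtain ⟨w, hw, hwlen, hwprod, hequiv'⟩ := h.exists_cons_of_edge ih hyz hv hvlen hvprod
    exact ⟨w, hw, hwlen, hwprod, hequiv.trans hequiv'⟩

theorem hurwitzListEquiv (h : IsFiberTower ρ C S) :
    ∀ (n : ℕ) (l m : List G), IsAdmissible ρ C S l → IsAdmissible ρ C S m → l.length = n →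
      m.length = n → (l.map ρ).prod = (m.map ρ).prod → HurwitzListEquiv l m
  | 0, [], [], _, _, _, _, _ => .refl []
  | 1, [c], [d], hc, hd, _, _, hcd => by
    rw [h.injOn hc.1 hd.1 (by simpa using hcd)]
    exact .refl _
  | n + 2, c :: u, e :: v, hu, hv, hulen, hvlen, hprod => by
    have ih := hurwitzListEquiv h (n + 1)
    simp only [List.length_cons, Nat.add_right_cancel_iff] at hulen hvlen
    obtain ⟨p, hp⟩ : ∃ p, ((c :: u).map ρ).prod = p := ⟨_, rfl⟩
    have hpS : p ∈ S (n + 2) := hp ▸ hu.prod_mem (by simp [hulen])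
    obtain ⟨d, hd, hdp, hreach⟩ := h.connected n p hpS
    obtain ⟨w, hw, hwlen, hwprod⟩ := h.exists_isAdmissible (n + 1) hdp
    have hdw : ((d :: w).map ρ).prod = p := by simp [hwprod]
    have hdw_adm : IsAdmissible ρ C S (d :: w) := ⟨hd, by rwa [hdw, hwlen], hw⟩
    have reach {e : G} {v : List G} (hv : IsAdmissible ρ C S (e :: v)) (hvlen : v.length = n + 1)
        (hvprod : ((e :: v).map ρ).prod = p) : HurwitzListEquiv (d :: w) (e :: v) := by
      rw [List.map_cons, List.prod_cons] at hvprod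
      have hvp : (v.map ρ).prod = (ρ e)⁻¹ * p := by rw [← hvprod, inv_mul_cancel_left]
      have hvS : (ρ e)⁻¹ * p ∈ S (n + 1) := hvp ▸ hv.2.2.prod_mem hvlen
      obtain ⟨w', hw', hlen', hprod', hequiv⟩ :=
        h.exists_cons_of_reflTransGen ih (hreach e hv.1 hvS) hdw_adm hwlen hdw
      refine hequiv.trans ((ih w' v hw'.2.2 hv.2.2 hlen' hvlen ?_).cons e)
      rw [hvp, ← hprod', List.map_cons, List.prod_cons, inv_mul_cancel_left]
    exact (reach hu hulen hp).symm.trans (reach hv hvlen (hprod.symm.trans hp))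

end IsFiberTower

end FiberTower

section Cover

open Equiv Equiv.Perm

/-- The double transpositions of six letters, written as `(i j)(k l)` with `i < j`, `k < l` and
`i < k`. -/
def doubleTranspositions : List (Perm (Fin 6)) :=
  (List.finRange 6).flatMap fun j => (List.finRange 6).flatMap fun i =>
    (List.finRange 6).flatMap fun l => (List.finRange 6).filterMap fun k =>
      if i < j ∧ k < l ∧ i < k ∧ l ≠ j ∧ k ≠ j then some (swap i j * swap k l) else none

theorem cycleType_of_mem_doubleTranspositions {c : Perm (Fin 6)} (hc : c ∈ doubleTranspositions) :
    c.cycleType = {2, 2} := by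
  have h : doubleTranspositions.all fun c => c.cycleType = {2, 2} := by decide +kernel
  exact of_decide_eq_true (List.all_eq_true.1 h c hc)

theorem orderOf_of_mem_doubleTranspositions {c : Perm (Fin 6)} (hc : c ∈ doubleTranspositions) :
    orderOf c = 2 := by
  rw [← lcm_cycleType, cycleType_of_mem_doubleTranspositions hc]
  rfl

theorem mem_doubleTranspositions {c : Perm (Fin 6)} :
    c ∈ doubleTranspositions ↔ c ∈ alternatingGroup (Fin 6) ∧ orderOf c = 2 := by
  have mem_of_involution : ∀ c : Perm (Fin 6), c ^ 2 = 1 → c ≠ 1 → sign c = 1 →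
      c ∈ doubleTranspositions := by decide +kernel
  refine ⟨fun hc => ⟨?_, orderOf_of_mem_doubleTranspositions hc⟩, fun ⟨hc, hord⟩ => ?_⟩
  · exact cycleType_eq_two_two_subset_alternatingGroup (cycleType_of_mem_doubleTranspositions hc)
  · rw [orderOf_eq_prime_iff] at hord
    exact mem_of_involution c hord.1 hord.2 hc

theorem inv_of_mem_doubleTranspositions {c : Perm (Fin 6)} (hc : c ∈ doubleTranspositions) :
    c⁻¹ = c :=
  inv_eq_self_of_orderOf_eq_two (orderOf_of_mem_doubleTranspositions hc)

theorem conj_mem_doubleTranspositions {s c : Perm (Fin 6)} (hc : c ∈ doubleTranspositions) :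
    s * c * s⁻¹ ∈ doubleTranspositions := by
  rw [mem_doubleTranspositions] at hc ⊢
  exact ⟨alternatingGroup.normal.conj_mem c hc.1 s,
    ((MulAut.conj s).orderOf_eq c).trans hc.2⟩

theorem conj_inv_mem_doubleTranspositions_iff (c s : Perm (Fin 6)) :
    s⁻¹ * c * s ∈ doubleTranspositions ↔ c ∈ doubleTranspositions :=
  ⟨fun h => by simpa [mul_assoc] using conj_mem_doubleTranspositions (s := s) h,
    fun h => by simpa using conj_mem_doubleTranspositions (s := s⁻¹) h⟩

theorem HurwitzListEquiv.forall_mem_doubleTranspositions {l m : List (Perm (Fin 6))}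
    (h : HurwitzListEquiv l m) (hl : ∀ c ∈ l, c ∈ doubleTranspositions) :
    ∀ c ∈ m, c ∈ doubleTranspositions :=
  (h.forall_mem_iff (C := {c | c ∈ doubleTranspositions})
    conj_inv_mem_doubleTranspositions_iff).1 hl

theorem exists_conj_eq_of_mem_doubleTranspositions {c d : Perm (Fin 6)}
    (hc : c ∈ doubleTranspositions) (hd : d ∈ doubleTranspositions) : ∃ s, s * c * s⁻¹ = d :=
  isConj_iff.1 <| isConj_iff_cycleType_eq.2 <|
    (cycleType_of_mem_doubleTranspositions hc).trans (cycleType_of_mem_doubleTranspositions hd).symm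

/-- An alternating three-valued function on the three blocks `{0, 1}`, `{2, 3}`, `{4, 5}`, whose
coboundary is the cocycle of the threefold cover of the alternating group on six letters. -/
def cochain (i j k : Fin 6) : ZMod 3 :=
  if (i : ℕ) / 2 ≠ j / 2 ∧ (j : ℕ) / 2 ≠ k / 2 ∧ (i : ℕ) / 2 ≠ k / 2 then
    (-1) ^ (i + j + k : ℕ) else 0

/-- The lift of a double transposition to an involution of the threefold cover of the six letters;
in the projective plane over the field of four elements it is an elation, the six letters being the
points of a hyperoval. The value at other permutations is not used. -/
def elation (c : Perm (Fin 6)) : Perm (Fin 6 × ZMod 3) :=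
  prodShear c fun x => Equiv.addRight
    (∑ m with c m = m, ∑ n with c n = n, (cochain x m n - cochain (c x) m n))

/-- The group `3.A₆` generated by the elations. -/
def valentinerGroup : Subgroup (Perm (Fin 6 × ZMod 3)) :=
  Subgroup.closure (elation '' {c | c ∈ doubleTranspositions})

/-- A permutation of the cover that lies over `s` and conjugates the elations as `s` conjugates the
double transpositions. -/
structure IsCoverLift (g : Perm (Fin 6 × ZMod 3)) (s : Perm (Fin 6)) : Prop where
  fst_apply : ∀ a, (g a).1 = s a.1
  conj_elation : ∀ c ∈ doubleTranspositions, g * elation c * g⁻¹ = elation (s * c * s⁻¹)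

namespace IsCoverLift

variable {g h : Perm (Fin 6 × ZMod 3)} {s t : Perm (Fin 6)}

theorem one : IsCoverLift 1 1 := ⟨fun _ => rfl, fun _ _ => by simp⟩

theorem mul (hg : IsCoverLift g s) (hh : IsCoverLift h t) : IsCoverLift (g * h) (s * t) where
  fst_apply a := by rw [mul_apply, hg.fst_apply, hh.fst_apply, mul_apply]
  conj_elation c hc := by
    have := hg.conj_elation _ (conj_mem_doubleTranspositions (s := t) hc)
    rw [← hh.conj_elation c hc] at this
    simpa only [mul_assoc, mul_inv_rev] using this

theorem inv (hg : IsCoverLift g s) : IsCoverLift g⁻¹ s⁻¹ where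
  fst_apply a := by rw [eq_inv_iff_eq, ← hg.fst_apply]; simp
  conj_elation c hc := by
    have := hg.conj_elation _ (conj_mem_doubleTranspositions (s := s⁻¹) hc)
    simp only [mul_assoc, inv_inv, mul_inv_cancel_left, mul_inv_cancel, mul_one] at this ⊢
    rw [← this]
    group

theorem of_all (hfst : ∀ a, (g a).1 = s a.1)
    (hconj : doubleTranspositions.all fun c => g * elation c = elation (s * c * s⁻¹) * g) :
    IsCoverLift g s where
  fst_apply := hfst
  conj_elation c hc := mul_inv_eq_iff_eq_mul.2 (of_decide_eq_true (List.all_eq_true.1 hconj c hc))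

end IsCoverLift

theorem exists_isCoverLift (s : Perm (Fin 6)) : ∃ g, IsCoverLift g s := by
  have lift_swap : IsCoverLift (prodCongr (swap 0 1) (Equiv.neg (ZMod 3))) (swap 0 1) :=
    .of_all (by decide +kernel) (by decide +kernel)
  have lift_finRotate : IsCoverLift
      (prodShear (finRotate 6) fun x => Equiv.subLeft (-(x.val : ZMod 3))) (finRotate 6) :=
    .of_all (by decide +kernel) (by decide +kernel)
  have hs : s ∈ Subgroup.closure {finRotate 6, swap 0 1} := by
    rw [show swap (0 : Fin 6) 1 = swap 0 (finRotate 6 0) from rfl,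
      closure_cycle_adjacent_swap isCycle_finRotate support_finRotate]
    trivial
  induction hs using Subgroup.closure_induction with
  | mem s hs =>
    obtain rfl | rfl := hs
    exacts [⟨_, lift_finRotate⟩, ⟨_, lift_swap⟩]
  | one => exact ⟨1, .one⟩
  | mul s t _ _ hs ht => exact hs.elim fun _ hg => ht.elim fun _ hh => ⟨_, hg.mul hh⟩
  | inv s _ hs => exact hs.elim fun _ hg => ⟨_, hg.inv⟩

theorem isCoverLift_elation {c : Perm (Fin 6)} (hc : c ∈ doubleTranspositions) :
    IsCoverLift (elation c) c := by
  have base_mem : swap 0 1 * swap 2 3 ∈ doubleTranspositions := by decide +kernel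
  have base : IsCoverLift (elation (swap 0 1 * swap 2 3)) (swap 0 1 * swap 2 3) :=
    .of_all (fun _ => rfl) (by decide +kernel)
  obtain ⟨s, rfl⟩ := exists_conj_eq_of_mem_doubleTranspositions base_mem hc
  obtain ⟨g, hg⟩ := exists_isCoverLift s
  rw [← hg.conj_elation _ base_mem]
  exact (hg.mul base).mul hg.inv

end Cover

section Valentiner

open Equiv Equiv.Perm

/-- The product of the lifts of the entries of a list of double transpositions. -/
def elationProd (w : List (Perm (Fin 6))) : Perm (Fin 6 × ZMod 3) := (w.map elation).prod

theorem elationProd_nil : elationProd [] = 1 := rfl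

theorem elationProd_cons (c : Perm (Fin 6)) (w : List (Perm (Fin 6))) :
    elationProd (c :: w) = elation c * elationProd w := by
  simp [elationProd]

theorem elationProd_append (v w : List (Perm (Fin 6))) :
    elationProd (v ++ w) = elationProd v * elationProd w := by
  simp [elationProd]

theorem elation_apply (c : Perm (Fin 6)) (x : Fin 6) (t : ZMod 3) :
    elation c (x, t) = (c x, t + (elation c (x, 0)).2) := by
  simp [elation]

theorem elation_injective : Function.Injective elation := fun c d h => by
  ext1 x
  simpa [elation] using congrArg Prod.fst (DFunLike.congr_fun h (x, 0))

theorem elation_inv {c : Perm (Fin 6)} (hc : c ∈ doubleTranspositions) :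
    (elation c)⁻¹ = elation c := by
  have base_mem : swap 0 1 * swap 2 3 ∈ doubleTranspositions := by decide +kernel
  have base : (elation (swap 0 1 * swap 2 3))⁻¹ = elation (swap 0 1 * swap 2 3) := by
    decide +kernel
  obtain ⟨s, rfl⟩ := exists_conj_eq_of_mem_doubleTranspositions base_mem hc
  obtain ⟨g, hg⟩ := exists_isCoverLift s
  rw [← hg.conj_elation _ base_mem, mul_inv_rev, mul_inv_rev, base, inv_inv, mul_assoc]

theorem elation_mem {c : Perm (Fin 6)} (hc : c ∈ doubleTranspositions) :
    elation c ∈ valentinerGroup :=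
  Subgroup.subset_closure ⟨c, hc, rfl⟩

theorem elationProd_mem {w : List (Perm (Fin 6))} (hw : ∀ c ∈ w, c ∈ doubleTranspositions) :
    elationProd w ∈ valentinerGroup := by
  refine Subgroup.list_prod_mem _ fun p hp => ?_
  obtain ⟨c, hc, rfl⟩ := List.mem_map.1 hp
  exact elation_mem (hw c hc)

theorem exists_elationProd_eq {p : Perm (Fin 6 × ZMod 3)} (hp : p ∈ valentinerGroup) :
    ∃ w : List (Perm (Fin 6)), (∀ c ∈ w, c ∈ doubleTranspositions) ∧ elationProd w = p := by
  induction hp using Subgroup.closure_induction_left with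
  | one => exact ⟨[], by simp, rfl⟩
  | mul_left _ hc _ _ ih =>
    obtain ⟨c, hc, rfl⟩ := hc
    obtain ⟨w, hw, rfl⟩ := ih
    exact ⟨c :: w, List.forall_mem_cons.2 ⟨hc, hw⟩, elationProd_cons c w⟩
  | inv_mul_cancel _ hc _ _ ih =>
    obtain ⟨c, hc, rfl⟩ := hc
    obtain ⟨w, hw, rfl⟩ := ih
    exact ⟨c :: w, List.forall_mem_cons.2 ⟨hc, hw⟩, by rw [elationProd_cons, elation_inv hc]⟩

theorem isCoverLift_elationProd {w : List (Perm (Fin 6))}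
    (hw : ∀ c ∈ w, c ∈ doubleTranspositions) : IsCoverLift (elationProd w) w.prod := by
  induction w with
  | nil => exact .one
  | cons c w ih =>
    rw [List.forall_mem_cons] at hw
    simpa [elationProd_cons] using (isCoverLift_elation hw.1).mul (ih hw.2)

namespace IsCoverLift

variable {g : Perm (Fin 6 × ZMod 3)} {s : Perm (Fin 6)}

theorem conj_elationProd (hg : IsCoverLift g s) {w : List (Perm (Fin 6))}
    (hw : ∀ c ∈ w, c ∈ doubleTranspositions) :
    g * elationProd w * g⁻¹ = elationProd (w.map fun c => s * c * s⁻¹) := by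
  induction w with
  | nil => simp [elationProd_nil]
  | cons c w ih =>
    rw [List.forall_mem_cons] at hw
    have := congrArg₂ (· * ·) (hg.conj_elation c hw.1) (ih hw.2)
    simpa [elationProd_cons, mul_assoc] using this

theorem conj_mem_valentinerGroup (hg : IsCoverLift g s) {p : Perm (Fin 6 × ZMod 3)}
    (hp : p ∈ valentinerGroup) : g * p * g⁻¹ ∈ valentinerGroup := by
  obtain ⟨w, hw, rfl⟩ := exists_elationProd_eq hp
  rw [hg.conj_elationProd hw]
  refine elationProd_mem fun c hc => ?_
  obtain ⟨d, hd, rfl⟩ := List.mem_map.1 hc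
  exact conj_mem_doubleTranspositions (hw d hd)

end IsCoverLift

/-- A permutation of the cover that preserves each fibre. -/
def IsVertical (p : Perm (Fin 6 × ZMod 3)) : Prop := ∀ a, (p a).1 = a.1

/-- The generator of the group of deck transformations of the cover. -/
def deckRotation : Perm (Fin 6 × ZMod 3) := prodCongr 1 (Equiv.addRight 1)

theorem deckRotation_pow_apply (j : ℕ) (a : Fin 6 × ZMod 3) :
    (deckRotation ^ j) a = (a.1, a.2 + j) := by
  induction j with
  | zero => simp
  | succ j ih =>
    rw [pow_succ', mul_apply, ih, Nat.cast_succ, ← add_assoc]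
    rfl

theorem commute_deckRotation {p : Perm (Fin 6 × ZMod 3)} (hp : p ∈ valentinerGroup) :
    Commute deckRotation p := by
  suffices valentinerGroup ≤ Subgroup.centralizer {deckRotation} from
    (Subgroup.mem_centralizer_singleton_iff.1 (this hp)).symm
  refine (Subgroup.closure_le _).2 ?_
  rintro _ ⟨c, -, rfl⟩
  refine Subgroup.mem_centralizer_singleton_iff.2 (Equiv.ext fun ⟨x, t⟩ => ?_)
  simp [deckRotation, elation, add_right_comm]

theorem apply_of_mem_valentinerGroup {p : Perm (Fin 6 × ZMod 3)} (hp : p ∈ valentinerGroup)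
    (x : Fin 6) (t : ZMod 3) : p (x, t) = ((p (x, 0)).1, (p (x, 0)).2 + t) := by
  have := DFunLike.congr_fun ((commute_deckRotation hp).pow_left t.val) (x, 0)
  simpa only [mul_apply, deckRotation_pow_apply, ZMod.natCast_val, ZMod.cast_id', id_eq,
    zero_add] using this.symm

/-- A vertical element of `3.A₆` commutes with every elation, so it translates all fibres by the
same amount. -/
theorem eq_deckRotation_pow {p : Perm (Fin 6 × ZMod 3)} (hp : p ∈ valentinerGroup)
    (hvert : IsVertical p) : p = deckRotation ^ (p (0, 0)).2.val := by
  have commute_elation {c} (hc : c ∈ doubleTranspositions) : Commute p (elation c) := by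
    obtain ⟨w, hw, rfl⟩ := exists_elationProd_eq hp
    have hlift := isCoverLift_elationProd hw
    have hprod : w.prod = 1 := by
      ext1 x
      exact (hlift.fst_apply (x, 0)).symm.trans (hvert (x, 0))
    have hconj := hlift.conj_elation c hc
    rw [hprod, one_mul, inv_one, mul_one] at hconj
    exact mul_inv_eq_iff_eq_mul.1 hconj
  have translate (x : Fin 6) (t : ZMod 3) : p (x, t) = (x, t + (p (x, 0)).2) := by
    rw [apply_of_mem_valentinerGroup hp, hvert, add_comm]
  have shift_eq (x : Fin 6) : (p (x, 0)).2 = (p (0, 0)).2 := by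
    have transitive : ∀ x : Fin 6, ∃ c ∈ doubleTranspositions, c 0 = x := by
      have h : ∀ x : Fin 6, doubleTranspositions.any fun c => c 0 = x := by decide +kernel
      simpa using h
    obtain ⟨c, hc, rfl⟩ := transitive x
    have := congrArg Prod.snd (DFunLike.congr_fun (commute_elation hc) (0, 0))
    rw [mul_apply, mul_apply, elation_apply, ← Prod.eta (p (0, 0)), hvert, translate,
      elation_apply c 0 (p (0, 0)).2, add_comm] at this
    simpa using this
  refine Equiv.ext fun ⟨x, t⟩ => ?_
  rw [deckRotation_pow_apply, translate, shift_eq, ZMod.natCast_val, ZMod.cast_id]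

end Valentiner

section Search

open Equiv Equiv.Perm

variable {α : Type*}

/-- A graph search from the vertices `s`, each of which is expanded once, that succeeds when all
vertices of `t` are visited within `n` expansions. -/
def visitsAll (r : α → α → Bool) : ℕ → List α → List α → Bool
  | _, _, [] => true
  | 0, _, _ :: _ => false
  | _ + 1, [], _ :: _ => false
  | n + 1, a :: s, b :: t =>
    visitsAll r n ((b :: t).filter (r a) ++ s) ((b :: t).filter fun c => !r a c)

theorem reflTransGen_of_visitsAll {r : α → α → Bool} {R : α → α → Prop} {V : Set α}
    (hR : ∀ a ∈ V, ∀ b ∈ V, r a b → R a b) {d : α} {n : ℕ} {s t : List α}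
    (hs : ∀ a ∈ s, a ∈ V ∧ Relation.ReflTransGen R d a) (ht : ∀ b ∈ t, b ∈ V)
    (h : visitsAll r n s t) : ∀ b ∈ t, Relation.ReflTransGen R d b := by
  induction n generalizing s t with
  | zero => cases t with
    | nil => simp
    | cons => simp [visitsAll] at h
  | succ n ih => cases t with
    | nil => simp
    | cons b t => cases s with
      | nil => simp [visitsAll] at h
      | cons a s =>
        rw [List.forall_mem_cons] at hs
        obtain ⟨⟨haV, hda⟩, hs⟩ := hs
        have reach_filter : ∀ c ∈ (b :: t).filter (r a), c ∈ V ∧ Relation.ReflTransGen R d c := by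
          intro c hc
          obtain ⟨hct, hac⟩ := List.mem_filter.1 hc
          exact ⟨ht c hct, hda.tail (hR a haV c (ht c hct) hac)⟩
        intro c hc
        by_cases hac : r a c
        · exact (reach_filter c (List.mem_filter.2 ⟨hc, hac⟩)).2
        · exact ih (List.forall_mem_append.2 ⟨reach_filter, hs⟩)
            (fun c hc => ht c (List.mem_of_mem_filter hc)) h c
            (List.mem_filter.2 ⟨hc, by simpa using hac⟩)

end Search

section Codes

open Equiv Equiv.Perm

theorem ofDigits_div_pow_mod {b : ℕ} (hb : 0 < b) {l : List ℕ} (hl : ∀ d ∈ l, d < b)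
    {i : ℕ} (hi : i < l.length) : Nat.ofDigits b l / b ^ i % b = l[i] := by
  induction l generalizing i with
  | nil => simp at hi
  | cons d l ih =>
    rw [List.forall_mem_cons] at hl
    cases i with
    | zero => simp [Nat.ofDigits_cons, Nat.mod_eq_of_lt hl.1]
    | succ i =>
      rw [Nat.ofDigits_cons, pow_succ', ← Nat.div_div_eq_div_mul, Nat.add_mul_div_left _ _ hb,
        Nat.div_eq_of_lt hl.1, zero_add, ih hl.2 (by simpa using hi)]
      rfl

/-- The numbering of the points of the cover; it numbers the points over `x` from `3 * x`. -/
def pointNumber : Fin 6 × ZMod 3 ≃ Fin 18 := finProdFinEquiv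

/-- The graph of a permutation of the cover as a number in base 32. Long kernel computations in
`3.A₆` run on these numbers. -/
def permCode (p : Perm (Fin 6 × ZMod 3)) : ℕ :=
  Nat.ofDigits 32 <| List.ofFn fun i : Fin 18 => (pointNumber (p (pointNumber.symm i)) : ℕ)

/-- The number of the image of the point numbered `i` under `l.prod`. -/
def prodAct (l : List (Perm (Fin 6 × ZMod 3))) (i : ℕ) : ℕ :=
  l.foldr (fun p i => permCode p / 32 ^ i % 32) i

theorem prodAct_pointNumber (l : List (Perm (Fin 6 × ZMod 3))) (a : Fin 6 × ZMod 3) :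
    prodAct l (pointNumber a) = (pointNumber (l.prod a) : ℕ) := by
  induction l with
  | nil => rfl
  | cons p l ih =>
    rw [prodAct, List.foldr_cons, ← prodAct, ih, List.prod_cons, mul_apply, permCode,
      ofDigits_div_pow_mod (by norm_num)]
    · rw [List.getElem_ofFn, Fin.eta, Equiv.symm_apply_apply]
    · intro d hd
      obtain ⟨i, rfl⟩ := (List.mem_ofFn' _ _).1 hd
      exact (Fin.is_lt _).trans (by norm_num)
    · simp

/-- The test for `l.prod ^ m = 1`. On elements of `3.A₆`, which commute with the deck
transformations, it suffices to look at the points numbered `3 * x`, one over each `x`. -/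
def powEqOneTest (m : ℕ) (l : List (Perm (Fin 6 × ZMod 3))) : Bool :=
  (List.range 6).all fun x => Nat.beq ((prodAct l)^[m] (3 * x)) (3 * x)

/-- The test for `l.prod` to be vertical. -/
def verticalTest (l : List (Perm (Fin 6 × ZMod 3))) : Bool :=
  (List.range 6).all fun x => Nat.beq (prodAct l (3 * x) / 3) x

theorem pointNumber_mk_zero (x : Fin 6) : (pointNumber (x, 0) : ℕ) = 3 * x :=
  Nat.zero_add _

theorem pointNumber_div_three (a : Fin 6 × ZMod 3) : pointNumber a / 3 = (a.1 : ℕ) := by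
  have : a.2.val < 3 := a.2.val_lt
  change ((a.2.val + 3 * a.1) / 3 : ℕ) = a.1
  omega

theorem powEqOneTest_iff {m : ℕ} {l : List (Perm (Fin 6 × ZMod 3))}
    (hl : l.prod ∈ valentinerGroup) : powEqOneTest m l ↔ l.prod ^ m = 1 := by
  have iterate (a : Fin 6 × ZMod 3) :
      (prodAct l)^[m] (pointNumber a) = (pointNumber ((l.prod ^ m) a) : ℕ) := by
    rw [← iterate_eq_pow]
    exact (Function.Semiconj.iterate_right (f := fun a => (pointNumber a : ℕ))
      (fun a => (prodAct_pointNumber l a).symm) m a).symm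
  have test_iff : powEqOneTest m l ↔ ∀ x, (l.prod ^ m) (x, 0) = (x, 0) := by
    simp only [powEqOneTest, List.all_eq_true, List.mem_range, Nat.beq_eq, ← Fin.forall_iff
      (p := fun x : Fin 6 => (prodAct l)^[m] (3 * x) = 3 * x), ← pointNumber_mk_zero, iterate,
      Fin.val_inj, pointNumber.apply_eq_iff_eq]
  refine test_iff.trans ⟨fun h => Equiv.ext fun ⟨x, t⟩ => ?_, fun h x => by rw [h, one_apply]⟩
  rw [apply_of_mem_valentinerGroup (pow_mem hl m), h, zero_add, one_apply]

theorem verticalTest_iff {l : List (Perm (Fin 6 × ZMod 3))} (hl : l.prod ∈ valentinerGroup) :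
    verticalTest l ↔ IsVertical l.prod := by
  have test_iff : verticalTest l ↔ ∀ x, (l.prod (x, 0)).1 = x := by
    simp only [verticalTest, List.all_eq_true, List.mem_range, Nat.beq_eq, ← Fin.forall_iff
      (p := fun x : Fin 6 => prodAct l (3 * x) / 3 = x), ← pointNumber_mk_zero,
      prodAct_pointNumber, pointNumber_div_three, Fin.val_inj]
  refine test_iff.trans ⟨fun h ⟨x, t⟩ => ?_, fun h x => h (x, 0)⟩
  rw [apply_of_mem_valentinerGroup hl, h]

end Codes

section Levels

open Equiv Equiv.Perm

/-- The double transposition `(i j)(k l)`. -/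
abbrev doubleTransposition (i j k l : Fin 6) : Perm (Fin 6) := swap i j * swap k l

/-- A word whose lifted product is `deckRotation`. -/
def deckWord : List (Perm (Fin 6)) :=
  [doubleTransposition 2 3 4 5, doubleTransposition 2 4 3 5, doubleTransposition 1 2 3 4,
    doubleTransposition 0 3 2 5, doubleTransposition 0 3 1 5]

/-- Words whose products represent the classes of `S₆` contained in `A₆`. -/
def alternatingClassWords : List (List (Perm (Fin 6))) :=
  [[], [doubleTransposition 0 1 2 3],
    [doubleTransposition 0 1 2 3, doubleTransposition 0 4 2 3],
    [doubleTransposition 0 1 2 3, doubleTransposition 0 4 2 5],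
    [doubleTransposition 0 1 2 3, doubleTransposition 0 3 4 5],
    [doubleTransposition 0 1 2 3, doubleTransposition 0 3 1 5]]

/-- Words whose lifted products represent the classes of `3.A₆` under lifts of `S₆`. -/
def valentinerClassWords : List (List (Perm (Fin 6))) :=
  [[], deckWord, deckWord ++ deckWord].flatMap fun v => alternatingClassWords.map (v ++ ·)

theorem elationProd_deckWord : elationProd deckWord = deckRotation := by decide +kernel

theorem mem_doubleTranspositions_of_mem_valentinerClassWords :
    ∀ w ∈ valentinerClassWords, ∀ c ∈ w, c ∈ doubleTranspositions := by
  have h : valentinerClassWords.all fun w => w.all doubleTranspositions.contains := by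
    decide +kernel
  simpa using h

theorem cycleType_mem_of_mem_alternatingGroup {s : Perm (Fin 6)}
    (hs : s ∈ alternatingGroup (Fin 6)) :
    s.cycleType ∈ ({0, {2, 2}, {3}, {3, 3}, {4, 2}, {5}} : Finset (Multiset ℕ)) := by
  obtain ⟨l, hl⟩ : ∃ l : List ℕ, (l : Multiset ℕ) = s.cycleType := ⟨_, Multiset.coe_toList _⟩
  have two_le : ∀ n ∈ l, 2 ≤ n := fun n hn => two_le_of_mem_cycleType (σ := s) (by simpa [← hl])
  have sum_le : l.sum ≤ 6 := by simpa [← hl] using sum_cycleType_le s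
  have even : Even (l.sum + l.length) := by
    rw [mem_alternatingGroup, sign_of_cycleType, ← hl] at hs
    simpa using neg_one_pow_eq_one_iff_even (by decide) |>.1 hs
  have length_le : l.length * 2 ≤ l.sum := List.card_nsmul_le_sum l 2 two_le
  rw [← hl]
  match l with
  | [] => decide
  | [a] =>
    have : a ≤ 6 := sum_le
    have : 2 ≤ a := length_le
    interval_cases a <;> revert even <;> decide
  | [a, b] =>
    simp only [List.forall_mem_cons, List.sum_cons, List.sum_nil, add_zero] at two_le sum_le
    obtain ⟨ha, hb, -⟩ := two_le
    have : a ≤ 4 := by omega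
    have : b ≤ 4 := by omega
    interval_cases a <;> interval_cases b <;> revert even sum_le <;> decide
  | a :: b :: c :: l =>
    rw [List.length_cons, List.length_cons, List.length_cons] at length_le even
    rw [Nat.even_iff] at even
    omega

theorem exists_conj_alternatingClassWord {s : Perm (Fin 6)} (hs : s ∈ alternatingGroup (Fin 6)) :
    ∃ w ∈ alternatingClassWords, ∃ t, t * w.prod * t⁻¹ = s := by
  have words : ∀ m ∈ ({0, {2, 2}, {3}, {3, 3}, {4, 2}, {5}} : Finset (Multiset ℕ)),
      ∃ w ∈ alternatingClassWords, w.prod.cycleType = m := by decide +kernel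
  obtain ⟨w, hw, hcyc⟩ := words _ (cycleType_mem_of_mem_alternatingGroup hs)
  rw [← isConj_iff_cycleType_eq, isConj_iff] at hcyc
  exact ⟨w, hw, hcyc⟩

theorem prod_mem_alternatingGroup {w : List (Perm (Fin 6))}
    (hw : ∀ c ∈ w, c ∈ doubleTranspositions) : w.prod ∈ alternatingGroup (Fin 6) :=
  Subgroup.list_prod_mem _ fun c hc => (mem_doubleTranspositions.1 (hw c hc)).1

/-- Two elements of `3.A₆` over the same permutation differ by a power of `deckRotation`. -/
theorem exists_conj_valentinerClassWord {p : Perm (Fin 6 × ZMod 3)} (hp : p ∈ valentinerGroup) :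
    ∃ w ∈ valentinerClassWords, ∃ g s, IsCoverLift g s ∧ g * elationProd w * g⁻¹ = p := by
  have alternatingClassWords_mem : ∀ w ∈ alternatingClassWords, ∀ c ∈ w,
      c ∈ doubleTranspositions := fun w hw =>
    mem_doubleTranspositions_of_mem_valentinerClassWords w (by simp [valentinerClassWords, hw])
  obtain ⟨v, hv, rfl⟩ := exists_elationProd_eq hp
  obtain ⟨w, hw, t, ht⟩ := exists_conj_alternatingClassWord (prod_mem_alternatingGroup hv)
  obtain ⟨g, hg⟩ := exists_isCoverLift t
  have hw' := alternatingClassWords_mem w hw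
  set q := g⁻¹ * elationProd v * g * (elationProd w)⁻¹ with hq
  have hq_mem : q ∈ valentinerGroup :=
    mul_mem (by simpa using hg.inv.conj_mem_valentinerGroup (elationProd_mem hv))
      (inv_mem (elationProd_mem hw'))
  have hq_vert : IsVertical q := fun a => by
    have := (((hg.inv.mul (isCoverLift_elationProd hv)).mul hg).mul
      (isCoverLift_elationProd hw').inv).fst_apply a
    rw [this, ← ht]
    group
    simp
  have hv_eq : elationProd v = g * (q * elationProd w) * g⁻¹ := by rw [hq]; group
  obtain ⟨u, hu, hqu⟩ : ∃ u ∈ [[], deckWord, deckWord ++ deckWord], elationProd u = q := by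
    rw [eq_deckRotation_pow hq_mem hq_vert]
    generalize (q (0, 0)).2 = j
    fin_cases j
    · exact ⟨[], by simp, rfl⟩
    · exact ⟨deckWord, by simp, elationProd_deckWord⟩
    · refine ⟨deckWord ++ deckWord, by simp, ?_⟩
      rw [elationProd_append, elationProd_deckWord]
      rfl
  refine ⟨u ++ w, ?_, g, t, hg, by rw [elationProd_append, hqu, hv_eq]⟩
  exact List.mem_flatMap.2 ⟨u, hu, List.mem_map_of_mem hw⟩

end Levels

section Tower

open Equiv Equiv.Perm

/-- The condition imposed on products of `n` elations, found by computation. It is invariant under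
lifts of `S₆`, makes the levels a fibre tower, and passes from a product of level at least three to
its product with any elation. -/
def IsOfLevel : ℕ → Perm (Fin 6 × ZMod 3) → Prop
  | 0, p => p = 1
  | 1, p => p ≠ 1 ∧ p ^ 2 = 1
  | 2, p => ¬IsVertical p ∧ p ^ 2 ≠ 1 ∧ (p ^ 3 = 1 ∨ p ^ 4 = 1 ∨ p ^ 5 = 1)
  | 3, p => p ^ 4 ≠ 1 ∧ p ^ 5 ≠ 1 ∧ p ^ 6 ≠ 1
  | 4, p => ¬IsVertical p ∧ p ^ 2 ≠ 1
  | 5, p => p ≠ 1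
  | _ + 6, _ => True

/-- The test for `l.prod` to be of level `n`. -/
def levelTest : ℕ → List (Perm (Fin 6 × ZMod 3)) → Bool
  | 0, l => powEqOneTest 1 l
  | 1, l => !powEqOneTest 1 l && powEqOneTest 2 l
  | 2, l => !verticalTest l && !powEqOneTest 2 l &&
    (powEqOneTest 3 l || powEqOneTest 4 l || powEqOneTest 5 l)
  | 3, l => !powEqOneTest 4 l && !powEqOneTest 5 l && !powEqOneTest 6 l
  | 4, l => !verticalTest l && !powEqOneTest 2 l
  | 5, l => !powEqOneTest 1 l
  | _ + 6, _ => true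

theorem levelTest_iff {n : ℕ} {l : List (Perm (Fin 6 × ZMod 3))}
    (hl : l.prod ∈ valentinerGroup) : levelTest n l ↔ IsOfLevel n l.prod := by
  match n with
  | 0 | 1 | 2 | 3 | 4 | 5 | n + 6 =>
    simp [levelTest, IsOfLevel, Bool.eq_false_iff, powEqOneTest_iff hl, verticalTest_iff hl,
      and_assoc, or_assoc]

/-- The elements of `3.A₆` of level `n`, in the sense of `IsOfLevel`. -/
def valentinerLevel (n : ℕ) : Set (Perm (Fin 6 × ZMod 3)) :=
  {p | p ∈ valentinerGroup ∧ IsOfLevel n p}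

namespace IsCoverLift

variable {g p : Perm (Fin 6 × ZMod 3)} {s : Perm (Fin 6)}

theorem isVertical_conj (hg : IsCoverLift g s) (hp : IsVertical p) : IsVertical (g * p * g⁻¹) :=
  fun a => by
    rw [mul_apply, mul_apply, hg.fst_apply, hp, hg.inv.fst_apply, Perm.inv_def, apply_symm_apply]

theorem isVertical_conj_iff (hg : IsCoverLift g s) : IsVertical (g * p * g⁻¹) ↔ IsVertical p := by
  refine ⟨fun h => ?_, hg.isVertical_conj⟩
  simpa [mul_assoc] using hg.inv.isVertical_conj h

theorem isOfLevel_conj_iff (hg : IsCoverLift g s) {n : ℕ} :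
    IsOfLevel n (g * p * g⁻¹) ↔ IsOfLevel n p := by
  match n with
  | 0 | 1 | 2 | 3 | 4 | 5 | _ + 6 =>
    simp only [IsOfLevel, conj_pow, conj_eq_one_iff, ne_eq, hg.isVertical_conj_iff]

theorem conj_mem_valentinerLevel (hg : IsCoverLift g s) {n : ℕ} (hp : p ∈ valentinerLevel n) :
    g * p * g⁻¹ ∈ valentinerLevel n :=
  ⟨hg.conj_mem_valentinerGroup hp.1, hg.isOfLevel_conj_iff.2 hp.2⟩

theorem elation_conj_inv_mul (hg : IsCoverLift g s) {c : Perm (Fin 6)}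
    (hc : c ∈ doubleTranspositions) :
    (elation (s * c * s⁻¹))⁻¹ * (g * p * g⁻¹) = g * ((elation c)⁻¹ * p) * g⁻¹ := by
  rw [← hg.conj_elation c hc]
  group

theorem fiberEdge_conj (hg : IsCoverLift g s) {n : ℕ} {d y : Perm (Fin 6)}
    (hd : d ∈ doubleTranspositions)
    (h : FiberEdge elation {c | c ∈ doubleTranspositions} valentinerLevel n p d y) :
    FiberEdge elation {c | c ∈ doubleTranspositions} valentinerLevel n (g * p * g⁻¹)
      (s * d * s⁻¹) (s * y * s⁻¹) := by
  obtain ⟨hy, hyp, hydp⟩ := h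
  refine ⟨conj_mem_doubleTranspositions hy, ?_, ?_⟩
  · rw [hg.elation_conj_inv_mul hy]
    exact hg.conj_mem_valentinerLevel hyp
  · rw [mul_assoc, hg.elation_conj_inv_mul hd, hg.elation_conj_inv_mul hy, ← mul_assoc]
    exact hg.conj_mem_valentinerLevel hydp

theorem reflTransGen_fiberEdge_conj (hg : IsCoverLift g s) {n : ℕ} {d e : Perm (Fin 6)}
    (hd : d ∈ doubleTranspositions)
    (h : Relation.ReflTransGen
      (FiberEdge elation {c | c ∈ doubleTranspositions} valentinerLevel n p) d e) :
    Relation.ReflTransGen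
      (FiberEdge elation {c | c ∈ doubleTranspositions} valentinerLevel n (g * p * g⁻¹))
      (s * d * s⁻¹) (s * e * s⁻¹) := by
  suffices e ∈ doubleTranspositions ∧ _ from this.2
  induction h with
  | refl => exact ⟨hd, .refl⟩
  | tail _ hbc ih => exact ⟨hbc.1, ih.2.tail (hg.fiberEdge_conj ih.1 hbc)⟩

end IsCoverLift

/-- The condition `IsFiberTower.connected` for the levels at `p`. -/
def IsFiberConnected (n : ℕ) (p : Perm (Fin 6 × ZMod 3)) : Prop :=
  ∃ d ∈ doubleTranspositions, (elation d)⁻¹ * p ∈ valentinerLevel (n + 1) ∧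
    ∀ e ∈ doubleTranspositions, (elation e)⁻¹ * p ∈ valentinerLevel (n + 1) →
      Relation.ReflTransGen
        (FiberEdge elation {c | c ∈ doubleTranspositions} valentinerLevel n p) d e

theorem IsCoverLift.isFiberConnected_conj {g p : Perm (Fin 6 × ZMod 3)} {s : Perm (Fin 6)}
    (hg : IsCoverLift g s) {n : ℕ} (h : IsFiberConnected n p) :
    IsFiberConnected n (g * p * g⁻¹) := by
  obtain ⟨d, hd, hdp, hreach⟩ := h
  refine ⟨s * d * s⁻¹, conj_mem_doubleTranspositions hd, ?_, fun e he hep => ?_⟩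
  · rw [hg.elation_conj_inv_mul hd]
    exact hg.conj_mem_valentinerLevel hdp
  · obtain ⟨c, rfl⟩ : ∃ c, s * c * s⁻¹ = e := ⟨s⁻¹ * e * s, by group⟩
    have hc : c ∈ doubleTranspositions := by
      simpa [mul_assoc] using conj_mem_doubleTranspositions (s := s⁻¹) he
    refine hg.reflTransGen_fiberEdge_conj hd (hreach c hc ?_)
    rw [hg.elation_conj_inv_mul hc] at hep
    simpa [mul_assoc] using hg.inv.conj_mem_valentinerLevel hep

theorem inv_elation_mul_mem_valentinerLevel_iff {c : Perm (Fin 6)}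
    (hc : c ∈ doubleTranspositions) {p : Perm (Fin 6 × ZMod 3)} (hp : p ∈ valentinerGroup)
    {n : ℕ} :
    (elation c)⁻¹ * p ∈ valentinerLevel n ↔ IsOfLevel n (elation c * p) := by
  rw [elation_inv hc]
  exact and_iff_right (mul_mem (elation_mem hc) hp)

/-- The test for `IsFiberConnected n p`. -/
def fiberTest (n : ℕ) (p : Perm (Fin 6 × ZMod 3)) : Bool :=
  match doubleTranspositions.filter fun d => levelTest (n + 1) [elation d, p] with
  | [] => false
  | d :: t => visitsAll (fun a y => levelTest n [elation y, elation a, p]) 45 [d] t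

theorem isFiberConnected_of_fiberTest {n : ℕ} {p : Perm (Fin 6 × ZMod 3)}
    (hp : p ∈ valentinerGroup) (h : fiberTest n p) : IsFiberConnected n p := by
  have mem_vertices {e} : e ∈ doubleTranspositions.filter
      (fun d => levelTest (n + 1) [elation d, p]) ↔
        e ∈ doubleTranspositions ∧ (elation e)⁻¹ * p ∈ valentinerLevel (n + 1) := by
    refine List.mem_filter.trans (and_congr_right fun he => ?_)
    rw [inv_elation_mul_mem_valentinerLevel_iff he hp, ← List.prod_pair, levelTest_iff]
    simpa using mul_mem (elation_mem he) hp
  rw [fiberTest] at h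
  split at h
  · cases h
  next d t hvertices =>
  rw [hvertices] at mem_vertices
  obtain ⟨hd, hdp⟩ := mem_vertices.1 List.mem_cons_self
  have edge : ∀ a ∈ {a | a ∈ d :: t}, ∀ y ∈ {y | y ∈ d :: t},
      levelTest n [elation y, elation a, p] →
        FiberEdge elation {c | c ∈ doubleTranspositions} valentinerLevel n p a y := by
    intro a ha y hy hlevel
    obtain ⟨ha, hap⟩ := mem_vertices.1 ha
    obtain ⟨hy, hyp⟩ := mem_vertices.1 hy
    refine ⟨hy, hyp, ?_⟩
    rw [mul_assoc, inv_elation_mul_mem_valentinerLevel_iff hy hap.1, elation_inv ha]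
    have hmem := mul_mem (elation_mem hy) (mul_mem (elation_mem ha) hp)
    simpa using (levelTest_iff (by simpa using hmem)).1 hlevel
  refine ⟨d, hd, hdp, fun e he hep => ?_⟩
  obtain rfl | het := List.mem_cons.1 (mem_vertices.2 ⟨he, hep⟩)
  · exact .refl
  · exact reflTransGen_of_visitsAll edge (by simp [Relation.ReflTransGen.refl])
      (fun b hb => List.mem_cons_of_mem d hb) h e het

set_option maxRecDepth 100000 in
theorem fiberTest_elationProd :
    (List.range 6).all fun n => valentinerClassWords.all fun w =>
      !levelTest (n + 2) [elationProd w] || fiberTest n (elationProd w) := by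
  decide +kernel

theorem isFiberConnected_elationProd {n : ℕ} (hn : n < 6) {w : List (Perm (Fin 6))}
    (hw : w ∈ valentinerClassWords) (hlevel : IsOfLevel (n + 2) (elationProd w)) :
    IsFiberConnected n (elationProd w) := by
  have hmem := elationProd_mem (mem_doubleTranspositions_of_mem_valentinerClassWords w hw)
  have htest : levelTest (n + 2) [elationProd w] := by
    rwa [levelTest_iff (by simpa using hmem), List.prod_singleton]
  have := List.all_eq_true.1
    (List.all_eq_true.1 fiberTest_elationProd n (List.mem_range.2 hn)) w hw
  rw [htest, Bool.not_true, Bool.false_or] at this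
  exact isFiberConnected_of_fiberTest hmem this

theorem isFiberConnected_of_mem_valentinerLevel {n : ℕ} {p : Perm (Fin 6 × ZMod 3)}
    (hp : p ∈ valentinerLevel (n + 2)) : IsFiberConnected n p := by
  obtain hn | hn := lt_or_ge n 6
  · obtain ⟨w, hw, g, s, hg, rfl⟩ := exists_conj_valentinerClassWord hp.1
    exact hg.isFiberConnected_conj
      (isFiberConnected_elationProd hn hw (hg.isOfLevel_conj_iff.1 hp.2))
  · obtain ⟨m, rfl⟩ := Nat.exists_eq_add_of_le' hn
    have mem {c q} (hc : c ∈ doubleTranspositions) (hq : q ∈ valentinerGroup) (k : ℕ) :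
        (elation c)⁻¹ * q ∈ valentinerLevel (k + 6) :=
      (inv_elation_mul_mem_valentinerLevel_iff hc hq).2 trivial
    obtain ⟨d, hd⟩ : ∃ d, d ∈ doubleTranspositions :=
      List.exists_mem_of_length_pos (by decide +kernel)
    exact ⟨d, hd, mem hd hp.1 _, fun e he _ => .single
      ⟨he, mem he hp.1 _, by rw [mul_assoc]; exact mem he (mem hd hp.1 m).1 _⟩⟩

theorem exists_elation_eq_of_mem_valentinerLevel_one {p : Perm (Fin 6 × ZMod 3)}
    (hp : p ∈ valentinerLevel 1) : ∃ c ∈ doubleTranspositions, elation c = p := by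
  have tests : valentinerClassWords.all fun w =>
      !levelTest 1 [elationProd w] || w.length = 1 := by decide +kernel
  obtain ⟨w, hw, g, s, hg, rfl⟩ := exists_conj_valentinerClassWord hp.1
  have hws := mem_doubleTranspositions_of_mem_valentinerClassWords w hw
  have hlevel : levelTest 1 [elationProd w] :=
    (levelTest_iff (by simpa using elationProd_mem hws)).2 (by
      simpa using hg.isOfLevel_conj_iff.1 hp.2)
  have hlen := List.all_eq_true.1 tests w hw
  rw [hlevel, Bool.not_true, Bool.false_or, decide_eq_true_eq, List.length_eq_one_iff] at hlen
  obtain ⟨c, rfl⟩ := hlen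
  have hc := hws c List.mem_cons_self
  exact ⟨s * c * s⁻¹, conj_mem_doubleTranspositions hc, by
    rw [← hg.conj_elation c hc, elationProd_cons, elationProd_nil, mul_one]⟩

theorem isFiberTower_valentinerLevel :
    IsFiberTower elation {c | c ∈ doubleTranspositions} valentinerLevel where
  conj_mem c hc d _ := by simpa using conj_mem_doubleTranspositions (s := d⁻¹) hc
  map_conj c hc d hd := by simpa using ((isCoverLift_elation hd).inv.conj_elation c hc).symm
  injOn := elation_injective.injOn
  level_zero _ hp := hp.2
  level_one _ hp := exists_elation_eq_of_mem_valentinerLevel_one hp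
  connected _ _ hp := isFiberConnected_of_mem_valentinerLevel hp

end Tower

section Ends

open Equiv Equiv.Perm

set_option maxRecDepth 100000 in
theorem levelTest_elation_mul_elationProd :
    (List.range 3).all fun n => valentinerClassWords.all fun w =>
      !levelTest (n + 3) [elationProd w] ||
        doubleTranspositions.all fun c => levelTest (n + 4) [elation c, elationProd w] := by
  decide +kernel

theorem elation_mul_mem_valentinerLevel {n : ℕ} {p : Perm (Fin 6 × ZMod 3)}
    (hp : p ∈ valentinerLevel (n + 3)) {c : Perm (Fin 6)} (hc : c ∈ doubleTranspositions) :
    elation c * p ∈ valentinerLevel (n + 4) := by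
  refine ⟨mul_mem (elation_mem hc) hp.1, ?_⟩
  obtain hn | hn := lt_or_ge n 3
  · obtain ⟨w, hw, g, s, hg, rfl⟩ := exists_conj_valentinerClassWord hp.1
    have hmem := elationProd_mem (mem_doubleTranspositions_of_mem_valentinerClassWords w hw)
    have hlevel : levelTest (n + 3) [elationProd w] := (levelTest_iff (by simpa using hmem)).2 (by
      simpa using hg.isOfLevel_conj_iff.1 hp.2)
    have htest := List.all_eq_true.1 (List.all_eq_true.1 levelTest_elation_mul_elationProd n
      (List.mem_range.2 hn)) w hw
    rw [hlevel, Bool.not_true, Bool.false_or] at htest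
    have hc' := conj_mem_doubleTranspositions (s := s⁻¹) hc
    have hlevel' := (levelTest_iff (by simpa using mul_mem (elation_mem hc') hmem)).1
      (List.all_eq_true.1 htest _ hc')
    rw [← hg.inv.conj_elation c hc, List.prod_pair, ← hg.isOfLevel_conj_iff] at hlevel'
    simpa [mul_assoc] using hlevel'
  · obtain ⟨m, rfl⟩ := Nat.exists_eq_add_of_le' hn
    trivial

/-- Admissibility for the elations and the levels of `3.A₆`. -/
abbrev IsValentinerAdmissible : List (Perm (Fin 6)) → Prop :=
  IsAdmissible elation {c | c ∈ doubleTranspositions} valentinerLevel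

theorem IsCoverLift.isValentinerAdmissible_map_conj {g : Perm (Fin 6 × ZMod 3)} {s : Perm (Fin 6)}
    (hg : IsCoverLift g s) {l : List (Perm (Fin 6))} (hl : IsValentinerAdmissible l) :
    IsValentinerAdmissible (l.map fun c => s * c * s⁻¹) := by
  induction l with
  | nil => trivial
  | cons c u ih =>
    refine ⟨conj_mem_doubleTranspositions hl.1, ?_, ih hl.2.2⟩
    have := hg.conj_mem_valentinerLevel hl.2.1
    rw [← elationProd, hg.conj_elationProd hl.mem] at this
    simpa [elationProd] using this

theorem isValentinerAdmissible_append {m t : List (Perm (Fin 6))}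
    (hm : ∀ c ∈ m, c ∈ doubleTranspositions) (hlen : 3 ≤ t.length)
    (ht : IsValentinerAdmissible t) : IsValentinerAdmissible (m ++ t) := by
  induction m with
  | nil => exact ht
  | cons c m ih =>
    rw [List.forall_mem_cons] at hm
    obtain ⟨n, hn⟩ : ∃ n, (m ++ t).length = n + 3 :=
      Nat.exists_eq_add_of_le' (hlen.trans (by simp))
    refine ⟨hm.1, ?_, ih hm.2⟩
    have := elation_mul_mem_valentinerLevel ((ih hm.2).prod_mem hn) hm.1
    simpa [hn] using this

/-- Equivalence to a list ending in an admissible triple. -/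
def HasAdmissibleEnd (l : List (Perm (Fin 6))) : Prop :=
  ∃ m t, HurwitzListEquiv l (m ++ t) ∧ t.length = 3 ∧ IsValentinerAdmissible t

namespace HasAdmissibleEnd

theorem of_equiv {l l' : List (Perm (Fin 6))} (h : HasAdmissibleEnd l')
    (hl : HurwitzListEquiv l l') : HasAdmissibleEnd l := by
  obtain ⟨m, t, hm, ht⟩ := h
  exact ⟨m, t, hl.trans hm, ht⟩

theorem of_isValentinerAdmissible {t : List (Perm (Fin 6))} (hlen : t.length = 3)
    (ht : IsValentinerAdmissible t) : HasAdmissibleEnd t :=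
  ⟨[], t, .refl t, hlen, ht⟩

theorem of_sublist {l t : List (Perm (Fin 6))} (ht : HasAdmissibleEnd t) (h : t.Sublist l) :
    HasAdmissibleEnd l := by
  obtain ⟨u, hu⟩ := HurwitzListEquiv.exists_append_right_of_sublist h
  obtain ⟨m, e, hm, he⟩ := ht
  exact ⟨u ++ m, e, hu.trans (by simpa using hm.append_left u), he⟩

theorem conj {l : List (Perm (Fin 6))} (h : HasAdmissibleEnd l) (s : Perm (Fin 6)) :
    HasAdmissibleEnd (l.map fun c => s * c * s⁻¹) := by
  obtain ⟨m, t, hm, hlen, ht⟩ := h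
  obtain ⟨g, hg⟩ := exists_isCoverLift s
  refine ⟨m.map fun c => s * c * s⁻¹, t.map fun c => s * c * s⁻¹, ?_, by simpa,
    hg.isValentinerAdmissible_map_conj ht⟩
  simpa using hm.map_conj s⁻¹

end HasAdmissibleEnd

end Ends

section ConjClosed

open Equiv Equiv.Perm

theorem conj_mem_iff_of_mem_closure {G : Type*} [Group G] {S K : Set G}
    (hSK : ∀ u ∈ S, ∀ v, u⁻¹ * v * u ∈ K ↔ v ∈ K) {g : G} (hg : g ∈ Subgroup.closure S) :
    ∀ v, g⁻¹ * v * g ∈ K ↔ v ∈ K := by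
  induction hg using Subgroup.closure_induction with
  | mem u hu => exact hSK u hu
  | one => simp
  | mul g h _ _ ihg ihh =>
    intro v
    rw [← ihg v, ← ihh (g⁻¹ * v * g)]
    simp only [mul_inv_rev, mul_assoc]
  | inv g _ ih => exact fun v => by simpa [mul_assoc] using (ih (g * v * g⁻¹)).symm

theorem exists_mem_alternatingGroup_conj_eq {c d : Perm (Fin 6)} (hc : c ∈ doubleTranspositions)
    (hd : d ∈ doubleTranspositions) : ∃ s ∈ alternatingGroup (Fin 6), s⁻¹ * c * s = d := by
  have hsupp : d.support.card + 2 ≤ Fintype.card (Fin 6) := by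
    rw [← sum_cycleType, cycleType_of_mem_doubleTranspositions hd]
    decide
  obtain ⟨s, hs⟩ := isConj_iff.1 (alternatingGroup.isConj_of
    (σ := ⟨d, (mem_doubleTranspositions.1 hd).1⟩) (τ := ⟨c, (mem_doubleTranspositions.1 hc).1⟩)
    (isConj_iff.2 (exists_conj_eq_of_mem_doubleTranspositions hd hc)) hsupp)
  refine ⟨s, s.2, ?_⟩
  obtain rfl : s * d * (s : Perm (Fin 6))⁻¹ = c := congrArg Subtype.val hs
  group

/-- Otherwise `K` would be stable under conjugation by `A₆`, which acts transitively on the double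
transpositions. -/
theorem exists_mem_notMem_of_closure_eq {l K : List (Perm (Fin 6))} {a b : Perm (Fin 6)}
    (hKC : ∀ u ∈ K, u ∈ doubleTranspositions) (hK : ∀ u ∈ K, ∀ v ∈ K, u⁻¹ * v * u ∈ K)
    (ha : a ∈ K) (hb : b ∈ doubleTranspositions) (hbK : b ∉ K)
    (hl : Subgroup.closure {g | g ∈ l} = alternatingGroup (Fin 6)) : ∃ c ∈ l, c ∉ K := by
  by_contra! hlK
  have conj_mem_iff : ∀ u ∈ {g | g ∈ l}, ∀ v, u⁻¹ * v * u ∈ {v | v ∈ K} ↔ v ∈ {v | v ∈ K} := by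
    refine fun u hu v => ⟨fun h => ?_, hK u (hlK u hu) v⟩
    have hinv : u⁻¹ = u := inv_of_mem_doubleTranspositions (hKC u (hlK u hu))
    have hsq : u * u = 1 := by rw [mul_eq_one_iff_eq_inv, hinv]
    have := hK u (hlK u hu) _ h
    rwa [hinv, show u * (u * v * u) * u = u * u * v * (u * u) by simp only [mul_assoc], hsq,
      one_mul, mul_one] at this
  obtain ⟨s, hs, rfl⟩ := exists_mem_alternatingGroup_conj_eq (hKC a ha) hb
  exact hbK ((conj_mem_iff_of_mem_closure conj_mem_iff (hl ▸ hs) a).2 ha)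

end ConjClosed

section Extension

open Equiv Equiv.Perm

theorem exists_pair_sublist_not_commute {G : Type*} [Group G] {l : List G} {g h : G}
    (hg : g ∈ Subgroup.closure {c | c ∈ l}) (hh : h ∈ Subgroup.closure {c | c ∈ l})
    (hgh : ¬Commute g h) : ∃ c d, [c, d].Sublist l ∧ ¬Commute c d := by
  by_contra! hcomm
  have : Std.Symm (Commute (S := G)) := ⟨fun _ _ => Commute.symm⟩
  have hpair := (List.pairwise_iff_forall_sublist.2 fun {c d} => hcomm c d).forall_of_forall
    fun c _ => Commute.refl c
  have := Subgroup.isMulCommutative_closure (k := {c | c ∈ l}) fun c hc d hd => hpair hc hd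
  exact hgh (setLike_mul_comm hg hh)

theorem elation_conj {c d : Perm (Fin 6)} (hc : c ∈ doubleTranspositions)
    (hd : d ∈ doubleTranspositions) : elation (d * c * d⁻¹) = elationProd [d, c, d] := by
  rw [← (isCoverLift_elation hd).conj_elation c hc, elation_inv hd]
  simp [elationProd, mul_assoc]

theorem elation_mem_valentinerLevel_one {c : Perm (Fin 6)} (hc : c ∈ doubleTranspositions) :
    elation c ∈ valentinerLevel 1 := by
  refine ⟨elation_mem hc, fun h => ?_, ?_⟩
  · have : c = 1 := by
      ext1 x
      simpa [h] using ((isCoverLift_elation hc).fst_apply (x, 0)).symm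
    simpa [this] using orderOf_of_mem_doubleTranspositions hc
  · rw [sq, mul_eq_one_iff_eq_inv, elation_inv hc]

/-- The test for an entry with lift `elationProd v`, followed by two entries with lifted product
`elationProd w`, to be admissible. -/
def tripleTest (v w : List (Perm (Fin 6))) : Bool :=
  levelTest 2 (w.map elation) && levelTest 3 ((v ++ w).map elation)

theorem hasAdmissibleEnd_of_tripleTest {p q r : Perm (Fin 6)} {v w : List (Perm (Fin 6))}
    (hp : p ∈ doubleTranspositions) (hq : q ∈ doubleTranspositions)
    (hr : r ∈ doubleTranspositions) (hv : elation p = elationProd v)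
    (hw : elation q * elation r = elationProd w) (h : tripleTest v w) :
    HasAdmissibleEnd [p, q, r] := by
  have hqr := mul_mem (elation_mem hq) (elation_mem hr)
  have hpqr := mul_mem (elation_mem hp) hqr
  rw [hv, hw, ← elationProd_append] at hpqr
  rw [hw] at hqr
  obtain ⟨h₂, h₃⟩ := Bool.and_eq_true_iff.1 h
  have level_two : elationProd w ∈ valentinerLevel 2 := ⟨hqr, (levelTest_iff hqr).1 h₂⟩
  have level_three : elationProd (v ++ w) ∈ valentinerLevel 3 :=
    ⟨hpqr, (levelTest_iff hpqr).1 h₃⟩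
  refine .of_isValentinerAdmissible rfl ⟨hp, ?_, hq, ?_, hr, ?_, trivial⟩
  · simpa [hv, hw, ← elationProd_append] using level_three
  · simpa [hw] using level_two
  · simpa using elation_mem_valentinerLevel_one hr

/-- A test for `[y, x, a, e]` to have an admissible end. The last two cases are about
`[x * y * x, a, e]` and `[y, x * a * x, e]`, which it contains after a Hurwitz move. -/
def extendsTest (a e x y : Perm (Fin 6)) : Bool :=
  tripleTest [y] [a, e] || tripleTest [y] [x, e] || tripleTest [y] [x, a] ||
    tripleTest [x, y, x] [a, e] || tripleTest [y] [x, a, x, e]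

theorem hasAdmissibleEnd_of_extendsTest {a e x y : Perm (Fin 6)} (ha : a ∈ doubleTranspositions)
    (he : e ∈ doubleTranspositions) (hx : x ∈ doubleTranspositions)
    (hy : y ∈ doubleTranspositions) (h : extendsTest a e x y) :
    HasAdmissibleEnd [y, x, a, e] := by
  have hinv := inv_of_mem_doubleTranspositions hx
  have pair (c d : Perm (Fin 6)) : elation c * elation d = elationProd [c, d] := by
    simp [elationProd]
  have single (c : Perm (Fin 6)) : elation c = elationProd [c] := by simp [elationProd]
  simp only [extendsTest, Bool.or_eq_true] at h
  obtain (((h | h) | h) | h) | h := h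
  · exact .of_sublist
      (hasAdmissibleEnd_of_tripleTest hy ha he (single y) (pair a e) h) (by simp)
  · exact .of_sublist
      (hasAdmissibleEnd_of_tripleTest hy hx he (single y) (pair x e) h) (by simp)
  · exact .of_sublist
      (hasAdmissibleEnd_of_tripleTest hy hx ha (single y) (pair x a) h) (by simp)
  · have hxy := conj_mem_doubleTranspositions (s := x) hy
    have hend := hasAdmissibleEnd_of_tripleTest hxy ha he (elation_conj hy hx) (pair a e) h
    refine .of_equiv (.of_sublist (l := [x, x * y * x⁻¹, a, e]) hend (by simp)) ?_
    simpa [hinv] using HurwitzListEquiv.swap y x [a, e]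
  · have hxa := conj_mem_doubleTranspositions (s := x) ha
    have hend := hasAdmissibleEnd_of_tripleTest hy hxa he (single y)
      (by rw [elation_conj ha hx, single e, ← elationProd_append]; rfl) h
    exact .of_equiv (.of_sublist hend (by simp))
      ((HurwitzListEquiv.swap_inv x a [e]).cons y)

end Extension

section Traps

open Equiv Equiv.Perm

/-- A conjugation-closed proper subset of the double transpositions containing `a` and `e`, which
therefore cannot contain a generating tuple of `A₆`. -/
structure IsTrap (a e : Perm (Fin 6)) (K : List (Perm (Fin 6))) : Prop where
  mem_doubleTranspositions : ∀ u ∈ K, u ∈ doubleTranspositions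
  left_mem : a ∈ K
  right_mem : e ∈ K
  conj_mem : ∀ u ∈ K, ∀ v ∈ K, u⁻¹ * v * u ∈ K
  exists_notMem : ∃ b ∈ doubleTranspositions, b ∉ K

theorem IsTrap.exists_mem_notMem {a e : Perm (Fin 6)} {l K : List (Perm (Fin 6))}
    (hK : IsTrap a e K) (hl : Subgroup.closure {g | g ∈ l} = alternatingGroup (Fin 6)) :
    ∃ c ∈ l, c ∉ K := by
  obtain ⟨b, hb, hbK⟩ := hK.exists_notMem
  exact exists_mem_notMem_of_closure_eq hK.mem_doubleTranspositions hK.conj_mem hK.left_mem hb hbK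
    hl

/-- A test for a list of double transpositions to be a trap. -/
def trapTest (a e : Perm (Fin 6)) (K : List (Perm (Fin 6))) : Bool :=
  K.contains a && K.contains e && doubleTranspositions.any (fun b => !K.contains b) &&
    K.all fun u => K.all fun v => K.any fun w =>
      powEqOneTest 1 [elation u, elation v, elation u, elation w]

theorem isTrap_of_trapTest {a e : Perm (Fin 6)} {K : List (Perm (Fin 6))}
    (hKC : ∀ u ∈ K, u ∈ doubleTranspositions) (h : trapTest a e K) : IsTrap a e K := by
  simp only [trapTest, Bool.and_eq_true, List.contains_iff_mem, List.any_eq_true, List.all_eq_true,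
    Bool.not_eq_true', Bool.eq_false_iff, ne_eq] at h
  obtain ⟨⟨⟨ha, he⟩, hproper⟩, hclosed⟩ := h
  refine ⟨hKC, ha, he, fun u hu v hv => ?_, hproper⟩
  obtain ⟨w, hw, hprod⟩ := hclosed u hu v hv
  have hmem := elationProd_mem (w := [u, v, u, w]) (by simp [hKC, hu, hv, hw])
  rw [powEqOneTest_iff (by exact hmem), pow_one] at hprod
  have hconj : elation (u * v * u⁻¹) = elation w := by
    rw [elation_conj (hKC v hv) (hKC u hu), ← elation_inv (hKC w hw), ← mul_eq_one_iff_eq_inv]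
    simpa [elationProd, mul_assoc] using hprod
  have hinv := inv_of_mem_doubleTranspositions (hKC u hu)
  rw [hinv] at hconj ⊢
  rwa [elation_injective hconj]

/-- The double transpositions that do not extend the pair `x`, `a`, `e` to an admissible end. -/
def nonextending (a e x : Perm (Fin 6)) : List (Perm (Fin 6)) :=
  doubleTranspositions.filter fun y => !extendsTest a e x y

/-- A test for every `x` outside a trap of `Ks` to yield an admissible end with `a` and `e`, or to
lie in a trap outside which every `y` yields one with `x`, `a` and `e`. -/
def coverTest (a e : Perm (Fin 6)) (Ks : List (List (Perm (Fin 6)))) : Bool :=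
  Ks.any fun K₀ => doubleTranspositions.all fun x =>
    tripleTest [x] [a, e] || K₀.contains x || Ks.any fun K =>
      K.contains x && doubleTranspositions.all fun y => K.contains y || extendsTest a e x y

theorem hasAdmissibleEnd_of_coverTest {a e : Perm (Fin 6)} {Ks : List (List (Perm (Fin 6)))}
    (ha : a ∈ doubleTranspositions) (he : e ∈ doubleTranspositions)
    (hKs : ∀ K ∈ Ks, IsTrap a e K) (hcover : coverTest a e Ks) {u : List (Perm (Fin 6))}
    (hu : ∀ c ∈ u, c ∈ doubleTranspositions)
    (hgen : Subgroup.closure {g | g ∈ u ++ [a, e]} = alternatingGroup (Fin 6)) :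
    HasAdmissibleEnd (u ++ [a, e]) := by
  simp only [coverTest, List.any_eq_true, List.all_eq_true, Bool.or_eq_true, Bool.and_eq_true,
    List.contains_iff_mem] at hcover
  obtain ⟨K₀, hK₀, hcover⟩ := hcover
  have exists_mem {v} (hv : Subgroup.closure {g | g ∈ v ++ [a, e]} = alternatingGroup (Fin 6))
      {K} (hK : K ∈ Ks) : ∃ c ∈ v, c ∉ K := by
    obtain ⟨c, hc, hcK⟩ := (hKs K hK).exists_mem_notMem hv
    refine ⟨c, (List.mem_append.1 hc).resolve_right fun hc => ?_, hcK⟩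
    simp only [List.mem_cons, List.not_mem_nil, or_false] at hc
    obtain rfl | rfl := hc
    exacts [hcK (hKs K hK).left_mem, hcK (hKs K hK).right_mem]
  obtain ⟨x, hxu, hxK₀⟩ := exists_mem hgen hK₀
  have hx := hu x hxu
  obtain (h | h) | ⟨K, hK, hxK, hextends⟩ := hcover x hx
  · have htriple := hasAdmissibleEnd_of_tripleTest hx ha he (by simp [elationProd])
      (by simp [elationProd]) h
    exact htriple.of_sublist ((List.singleton_sublist.2 hxu).append_right [a, e])
  · exact absurd h hxK₀
  · obtain ⟨r, hr⟩ :=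
      HurwitzListEquiv.exists_append_right_of_sublist (List.singleton_sublist.2 hxu)
    have hequiv := hr.append_right [a, e]
    obtain ⟨y, hyr, hyK⟩ := exists_mem (hequiv.closure_eq ▸ hgen) hK
    have hy := hr.forall_mem_doubleTranspositions hu y hyr
    replace hyr := (List.mem_append.1 hyr).resolve_right fun h => by
      obtain rfl := List.mem_singleton.1 h
      exact hyK hxK
    have hend := hasAdmissibleEnd_of_extendsTest ha he hx hy ((hextends y hy).resolve_left hyK)
    refine .of_equiv (hend.of_sublist ?_) hequiv
    simpa using (List.singleton_sublist.2 hyr).append_right [x, a, e]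

/-- The double transpositions not commuting with `(0 1)(2 3)`, up to conjugation, each with
representatives of those `x` that only extend via a trap. -/
def noncommutingReps : List (Perm (Fin 6) × List (Perm (Fin 6))) :=
  [(doubleTransposition 2 4 3 5, [doubleTransposition 0 1 3 4, doubleTransposition 0 2 1 3]),
    (doubleTransposition 0 3 4 5, [doubleTransposition 2 3 4 5, doubleTransposition 1 4 2 5]),
    (doubleTransposition 0 3 1 5, [doubleTransposition 2 3 4 5, doubleTransposition 1 2 3 5]),
    (doubleTransposition 0 4 3 5, [doubleTransposition 1 3 2 4, doubleTransposition 1 2 4 5,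
      doubleTransposition 1 4 3 5]),
    (doubleTransposition 0 4 2 3, [doubleTransposition 1 2 3 4, doubleTransposition 2 3 4 5,
      doubleTransposition 1 4 3 5])]

/-- Permutations centralizing `(0 1)(2 3)`. -/
def centralizingPerms : List (Perm (Fin 6)) :=
  [1, swap 0 1].flatMap fun s => [1, swap 2 3].flatMap fun t => [1, swap 4 5].flatMap fun u =>
    [1, doubleTransposition 0 2 1 3].map (s * t * u * ·)

theorem exists_conj_eq_noncommutingRep {c d : Perm (Fin 6)} (hc : c ∈ doubleTranspositions)
    (hd : d ∈ doubleTranspositions) (hcd : ¬Commute c d) :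
    ∃ s, ∃ r ∈ noncommutingReps, s * c * s⁻¹ = doubleTransposition 0 1 2 3 ∧ s * d * s⁻¹ = r.1 := by
  have base_mem : doubleTransposition 0 1 2 3 ∈ doubleTranspositions := by decide +kernel
  have centralizes : centralizingPerms.all fun z =>
      z * doubleTransposition 0 1 2 3 * z⁻¹ = doubleTransposition 0 1 2 3 := by decide +kernel
  have cover : doubleTranspositions.all fun e =>
      doubleTransposition 0 1 2 3 * e = e * doubleTransposition 0 1 2 3 ||
        centralizingPerms.any fun z => noncommutingReps.any fun r => z * e * z⁻¹ = r.1 := by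
    decide +kernel
  obtain ⟨s, hs⟩ := exists_conj_eq_of_mem_doubleTranspositions hc base_mem
  have htest := List.all_eq_true.1 cover _ (conj_mem_doubleTranspositions (s := s) hd)
  simp only [Bool.or_eq_true, decide_eq_true_eq, List.any_eq_true] at htest
  obtain hcomm | ⟨z, hz, r, hr, hzr⟩ := htest
  · rw [← hs] at hcomm
    exact absurd ((Commute.conj_iff s).1 hcomm) hcd
  · refine ⟨z * s, r, hr, ?_, by simpa [mul_assoc] using hzr⟩
    have hzs := of_decide_eq_true (List.all_eq_true.1 centralizes z hz)
    rw [← hs] at hzs ⊢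
    simpa [mul_assoc] using hzs

set_option maxRecDepth 100000 in
theorem trapTest_and_coverTest_noncommutingReps : noncommutingReps.all fun r =>
    (r.2.map (nonextending (doubleTransposition 0 1 2 3) r.1)).all
        (trapTest (doubleTransposition 0 1 2 3) r.1) &&
      coverTest (doubleTransposition 0 1 2 3) r.1
        (r.2.map (nonextending (doubleTransposition 0 1 2 3) r.1)) := by
  decide +kernel

theorem hasAdmissibleEnd_append_noncommutingRep {r : Perm (Fin 6) × List (Perm (Fin 6))}
    (hr : r ∈ noncommutingReps) {u : List (Perm (Fin 6))}
    (hu : ∀ c ∈ u, c ∈ doubleTranspositions)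
    (hgen : Subgroup.closure {g | g ∈ u ++ [doubleTransposition 0 1 2 3, r.1]} =
      alternatingGroup (Fin 6)) :
    HasAdmissibleEnd (u ++ [doubleTransposition 0 1 2 3, r.1]) := by
  have rep_mem : noncommutingReps.all fun r => doubleTranspositions.contains r.1 := by
    decide +kernel
  have hr' := List.all_eq_true.1 trapTest_and_coverTest_noncommutingReps r hr
  rw [Bool.and_eq_true, List.all_eq_true] at hr'
  refine hasAdmissibleEnd_of_coverTest (by decide +kernel)
    (by simpa using List.all_eq_true.1 rep_mem r hr) (fun K hK => ?_) hr'.2 hu hgen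
  obtain ⟨z, -, rfl⟩ := List.mem_map.1 hK
  exact isTrap_of_trapTest (fun c hc => List.mem_of_mem_filter hc) (hr'.1 _ hK)

theorem closure_map_conj_eq {G : Type*} [Group G] {l : List G} {N : Subgroup G} [N.Normal]
    (hl : Subgroup.closure {g | g ∈ l} = N) (s : G) :
    Subgroup.closure {g | g ∈ l.map fun g => s * g * s⁻¹} = N := by
  have himage : {g | g ∈ l.map fun g => s * g * s⁻¹} = MulAut.conj s '' {g | g ∈ l} := by
    ext; simp
  rw [himage, ← Subgroup.Normal.map_conj_eq (H := N) s, ← hl, MonoidHom.map_closure]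
  rfl

theorem hasAdmissibleEnd_of_closure_eq {l : List (Perm (Fin 6))}
    (hl : ∀ c ∈ l, c ∈ doubleTranspositions)
    (hgen : Subgroup.closure {g | g ∈ l} = alternatingGroup (Fin 6)) : HasAdmissibleEnd l := by
  have mem_closure {c} (hc : c ∈ doubleTranspositions) : c ∈ Subgroup.closure {g | g ∈ l} :=
    hgen ▸ (mem_doubleTranspositions.1 hc).1
  obtain ⟨c, d, hcd, hcomm⟩ := exists_pair_sublist_not_commute
    (mem_closure (c := doubleTransposition 0 1 2 3) (by decide +kernel))
    (mem_closure (c := doubleTransposition 2 4 3 5) (by decide +kernel))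
    (by rw [Commute, SemiconjBy]; decide +kernel)
  obtain ⟨s, r, hr, hc, hd⟩ := exists_conj_eq_noncommutingRep (hl c (hcd.subset (by simp)))
    (hl d (hcd.subset (by simp))) hcomm
  obtain ⟨u, hu⟩ := HurwitzListEquiv.exists_append_right_of_sublist hcd
  have hmap : (u ++ [c, d]).map (fun g => s * g * s⁻¹) =
      u.map (fun g => s * g * s⁻¹) ++ [doubleTransposition 0 1 2 3, r.1] := by
    simp [hc, hd]
  have hu_mem : ∀ g ∈ u.map fun g => s * g * s⁻¹, g ∈ doubleTranspositions :=
    List.forall_mem_map.2 fun g hg => conj_mem_doubleTranspositions <|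
      hu.forall_mem_doubleTranspositions hl g (List.mem_append_left _ hg)
  have hend := hasAdmissibleEnd_append_noncommutingRep hr hu_mem
    (by rw [← hmap, closure_map_conj_eq (hu.closure_eq ▸ hgen)])
  refine .of_equiv ?_ hu
  rw [← hmap] at hend
  simpa [mul_assoc, Function.comp_def] using hend.conj s⁻¹

end Traps

section Classification

open Equiv Equiv.Perm

/-- The tuples of the Nielsen class, written as lists. -/
structure IsNielsen (l : List (Perm (Fin 6))) : Prop where
  mem : ∀ c ∈ l, c ∈ doubleTranspositions
  prod_eq_one : l.prod = 1
  closure_eq : Subgroup.closure {g | g ∈ l} = alternatingGroup (Fin 6)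

theorem HurwitzListEquiv.elationProd_eq {l m : List (Perm (Fin 6))} (h : HurwitzListEquiv l m)
    (hl : ∀ c ∈ l, c ∈ doubleTranspositions) : elationProd l = elationProd m := by
  suffices (∀ c ∈ m, c ∈ doubleTranspositions) ∧ elationProd l = elationProd m from this.2
  refine (h.iff_of_step (p := fun n => (∀ c ∈ n, c ∈ doubleTranspositions) ∧
    elationProd l = elationProd n) fun {n n'} hstep => ?_).1 ⟨hl, rfl⟩
  have hmem : (∀ c ∈ n, c ∈ doubleTranspositions) ↔ ∀ c ∈ n', c ∈ doubleTranspositions :=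
    HurwitzListEquiv.forall_mem_iff (C := {c | c ∈ doubleTranspositions})
      conj_inv_mem_doubleTranspositions_iff (.rel _ _ hstep)
  rw [← hmem]
  refine and_congr_right fun hn => ?_
  obtain ⟨u, a, b, v⟩ := hstep
  have hb := hn b (by simp)
  have hconj := (isCoverLift_elation hb).inv.conj_elation a (hn a (by simp))
  rw [inv_inv, inv_inv] at hconj
  simp only [elationProd_append, elationProd_cons, ← hconj]
  group

theorem hurwitzListEquiv_of_elationProd_eq {l m : List (Perm (Fin 6))}
    (hl : ∀ c ∈ l, c ∈ doubleTranspositions)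
    (hm : ∀ c ∈ m, c ∈ doubleTranspositions)
    (hgenl : Subgroup.closure {g | g ∈ l} = alternatingGroup (Fin 6))
    (hgenm : Subgroup.closure {g | g ∈ m} = alternatingGroup (Fin 6))
    (hlen : l.length = m.length) (hprod : elationProd l = elationProd m) :
    HurwitzListEquiv l m := by
  have exists_admissible {n} (hn : ∀ c ∈ n, c ∈ doubleTranspositions)
      (hgen : Subgroup.closure {g | g ∈ n} = alternatingGroup (Fin 6)) :
      ∃ n', HurwitzListEquiv n n' ∧ IsValentinerAdmissible n' := by
    obtain ⟨u, t, h, hlen, ht⟩ := hasAdmissibleEnd_of_closure_eq hn hgen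
    exact ⟨u ++ t, h, isValentinerAdmissible_append
      (fun c hc => h.forall_mem_doubleTranspositions hn c (List.mem_append_left t hc)) hlen.ge ht⟩
  obtain ⟨l', hl', hadml⟩ := exists_admissible hl hgenl
  obtain ⟨m', hm', hadmm⟩ := exists_admissible hm hgenm
  refine hl'.trans (.trans ?_ hm'.symm)
  refine isFiberTower_valentinerLevel.hurwitzListEquiv l'.length _ _ hadml hadmm rfl ?_ ?_
  · rw [← hm'.length_eq, ← hl'.length_eq, hlen]
  · exact (hl'.elationProd_eq hl).symm.trans (hprod.trans (hm'.elationProd_eq hm))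

theorem IsNielsen.elationProd_eq_one_or_deckRotation_or_sq {l : List (Perm (Fin 6))}
    (hl : IsNielsen l) :
    elationProd l = 1 ∨ elationProd l = deckRotation ∨ elationProd l = deckRotation ^ 2 := by
  have hvert : IsVertical (elationProd l) := fun a => by
    rw [(isCoverLift_elationProd hl.mem).fst_apply, hl.prod_eq_one, one_apply]
  have hpow := eq_deckRotation_pow (elationProd_mem hl.mem) hvert
  have := (elationProd l (0, 0)).2.val_lt
  rw [hpow]
  interval_cases (elationProd l (0, 0)).2.val <;> simp

theorem IsNielsen.map_conj {l : List (Perm (Fin 6))} (hl : IsNielsen l) (s : Perm (Fin 6)) :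
    IsNielsen (l.map fun c => s * c * s⁻¹) where
  mem := List.forall_mem_map.2 fun _ hc => conj_mem_doubleTranspositions (hl.mem _ hc)
  prod_eq_one := by
    have := map_list_prod (MulAut.conj s) l
    rw [hl.prod_eq_one, map_one] at this
    exact this.symm
  closure_eq := closure_map_conj_eq hl.closure_eq s

theorem elationProd_map_conj_eq_one_iff {l : List (Perm (Fin 6))}
    (hl : ∀ c ∈ l, c ∈ doubleTranspositions) (s : Perm (Fin 6)) :
    elationProd (l.map fun c => s * c * s⁻¹) = 1 ↔ elationProd l = 1 := by
  obtain ⟨g, hg⟩ := exists_isCoverLift s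
  rw [← hg.conj_elationProd hl, conj_eq_one_iff]

theorem IsCoverLift.conj_deckRotation {g : Perm (Fin 6 × ZMod 3)}
    (hg : IsCoverLift g (swap 0 1)) : g * deckRotation * g⁻¹ = deckRotation ^ 2 := by
  have hmem : ∀ c ∈ deckWord, c ∈ doubleTranspositions := by
    have h : deckWord.all doubleTranspositions.contains := by decide +kernel
    simpa using h
  rw [← elationProd_deckWord, hg.conj_elationProd hmem]
  decide +kernel

theorem IsNielsen.exists_hurwitzListEquiv_map_conj {l m : List (Perm (Fin 6))} (hl : IsNielsen l)
    (hm : IsNielsen m) (hlen : l.length = m.length)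
    (hone : elationProd l = 1 ↔ elationProd m = 1) :
    ∃ s, HurwitzListEquiv (l.map fun c => s * c * s⁻¹) m := by
  suffices ∃ s, elationProd (l.map fun c => s * c * s⁻¹) = elationProd m by
    obtain ⟨s, hs⟩ := this
    have hl' := hl.map_conj s
    exact ⟨s, hurwitzListEquiv_of_elationProd_eq hl'.mem hm.mem hl'.closure_eq hm.closure_eq
      (by simpa) hs⟩
  by_cases hlm : elationProd l = elationProd m
  · exact ⟨1, by simpa⟩
  obtain ⟨g, hg⟩ := exists_isCoverLift (swap 0 1)
  refine ⟨swap 0 1, ?_⟩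
  rw [← hg.conj_elationProd hl.mem]
  have hdeck := hg.conj_deckRotation
  have hdeck_sq : g * deckRotation ^ 2 * g⁻¹ = deckRotation := by
    rw [← conj_pow, hdeck]
    decide +kernel
  obtain hl₁ | hl₁ | hl₁ := hl.elationProd_eq_one_or_deckRotation_or_sq
  · exact absurd (hl₁.trans (hone.1 hl₁).symm) hlm
  all_goals obtain hm₁ | hm₁ | hm₁ := hm.elationProd_eq_one_or_deckRotation_or_sq
  all_goals first
    | exact absurd ((hone.2 hm₁).trans hm₁.symm) hlm
    | exact absurd (hl₁.trans hm₁.symm) hlm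
    | rw [hl₁, hm₁]; assumption

end Classification

section Existence

open Equiv Equiv.Perm

/-- Entries that already generate `A₆`. -/
def generatingWord : List (Perm (Fin 6)) :=
  [doubleTransposition 0 1 2 3, doubleTransposition 0 2 4 5, doubleTransposition 2 4 3 5]

theorem mem_generatingWord : ∀ c ∈ generatingWord, c ∈ doubleTranspositions := by
  have h : generatingWord.all doubleTranspositions.contains := by decide +kernel
  simpa using h

theorem closure_generatingWord :
    Subgroup.closure {g | g ∈ generatingWord} = alternatingGroup (Fin 6) := by
  have hsearch : visitsAll (fun a b => generatingWord.any fun u => u * a * u⁻¹ = b) 45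
      [doubleTransposition 0 1 2 3] doubleTranspositions := by decide +kernel
  have reach := reflTransGen_of_visitsAll (V := {c | c ∈ doubleTranspositions})
    (R := fun a b => ∃ u ∈ generatingWord, u * a * u⁻¹ = b) (d := doubleTransposition 0 1 2 3)
    (fun a _ b _ h => by simpa using h)
    (by simpa using ⟨by decide +kernel, Relation.ReflTransGen.refl⟩) (fun _ h => h) hsearch
  have mem_closure {c}
      (hc : Relation.ReflTransGen (fun a b => ∃ u ∈ generatingWord, u * a * u⁻¹ = b)
        (doubleTransposition 0 1 2 3) c) :
      c ∈ Subgroup.closure {g | g ∈ generatingWord} := by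
    induction hc with
    | refl => exact Subgroup.subset_closure (by simp [generatingWord])
    | tail _ h ih =>
      obtain ⟨u, hu, rfl⟩ := h
      have hu := Subgroup.subset_closure (k := {g | g ∈ generatingWord}) hu
      exact mul_mem (mul_mem hu ih) (inv_mem hu)
  apply le_antisymm
  · exact (Subgroup.closure_le _).2 fun c hc =>
      (mem_doubleTranspositions.1 (mem_generatingWord c hc)).1
  · rw [← closure_cycleType_eq_two_two_eq_alternatingGroup (by simp), Subgroup.closure_le]
    intro c hc
    refine mem_closure <| reach c (mem_doubleTranspositions.2
      ⟨cycleType_eq_two_two_subset_alternatingGroup hc, ?_⟩)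
    rw [← lcm_cycleType, hc]
    rfl

theorem IsNielsen.of_subset {w l : List (Perm (Fin 6))}
    (hw : Subgroup.closure {g | g ∈ w} = alternatingGroup (Fin 6)) (hwl : w ⊆ l)
    (hl : ∀ c ∈ l, c ∈ doubleTranspositions) (hprod : l.prod = 1) : IsNielsen l where
  mem := hl
  prod_eq_one := hprod
  closure_eq := le_antisymm
    ((Subgroup.closure_le _).2 fun c hc => (mem_doubleTranspositions.1 (hl c hc)).1)
    (hw ▸ Subgroup.closure_mono fun _ hc => hwl hc)

theorem IsNielsen.exists_length_add {l : List (Perm (Fin 6))} (hl : IsNielsen l) (j : ℕ) :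
    ∃ m, IsNielsen m ∧ m.length = l.length + 2 * j ∧ elationProd m = elationProd l := by
  induction j with
  | zero => exact ⟨l, hl, rfl, rfl⟩
  | succ j ih =>
    obtain ⟨m, hm, hlen, hprod⟩ := ih
    obtain ⟨c, hc⟩ : ∃ c, c ∈ doubleTranspositions :=
      ⟨doubleTransposition 0 1 2 3, by decide +kernel⟩
    have hcc : c * c = 1 := mul_eq_one_iff_eq_inv.2 (inv_of_mem_doubleTranspositions hc).symm
    have hlift : elation c * elation c = 1 := mul_eq_one_iff_eq_inv.2 (elation_inv hc).symm
    refine ⟨c :: c :: m, .of_subset hm.closure_eq (by simp) (by simpa [hc] using hm.mem) ?_,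
      by rw [List.length_cons, List.length_cons, hlen]; ring, ?_⟩
    · rw [List.prod_cons, List.prod_cons, ← mul_assoc, hcc, one_mul, hm.prod_eq_one]
    · rw [elationProd_cons, elationProd_cons, ← mul_assoc, hlift, one_mul, hprod]

theorem exists_isNielsen_of_subset {w : List (Perm (Fin 6))} (hgen : generatingWord ⊆ w)
    (hmem : w.all doubleTranspositions.contains) (hprod : w.prod = 1) (j : ℕ) :
    ∃ l, IsNielsen l ∧ l.length = w.length + 2 * j ∧ elationProd l = elationProd w :=
  (IsNielsen.of_subset closure_generatingWord hgen (by simpa using hmem) hprod).exists_length_add j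

theorem exists_isNielsen_elationProd_eq_one {k : ℕ} (hk : 6 ≤ k) :
    ∃ l, IsNielsen l ∧ l.length = k ∧ elationProd l = 1 := by
  obtain ⟨j, rfl | rfl⟩ : ∃ j, k = 6 + 2 * j ∨ k = 7 + 2 * j := ⟨(k - 6) / 2, by omega⟩
  · obtain ⟨l, hl, hlen, hlift⟩ := exists_isNielsen_of_subset (w := generatingWord ++
      [doubleTransposition 2 4 3 5, doubleTransposition 1 3 4 5, doubleTransposition 0 3 1 2])
      (by simp) (by decide +kernel) (by decide +kernel) j
    exact ⟨l, hl, hlen, hlift.trans (by decide +kernel)⟩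
  · obtain ⟨l, hl, hlen, hlift⟩ := exists_isNielsen_of_subset (w := generatingWord ++
      [doubleTransposition 2 3 4 5, doubleTransposition 2 4 3 5, doubleTransposition 1 3 4 5,
        doubleTransposition 0 3 4 5])
      (by simp) (by decide +kernel) (by decide +kernel) j
    exact ⟨l, hl, hlen, hlift.trans (by decide +kernel)⟩

theorem exists_isNielsen_elationProd_ne_one {k : ℕ} (hk : 6 ≤ k) :
    ∃ l, IsNielsen l ∧ l.length = k ∧ elationProd l ≠ 1 := by
  obtain ⟨j, rfl | rfl⟩ : ∃ j, k = 6 + 2 * j ∨ k = 7 + 2 * j := ⟨(k - 6) / 2, by omega⟩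
  · obtain ⟨l, hl, hlen, hlift⟩ := exists_isNielsen_of_subset (w := generatingWord ++
      [doubleTransposition 2 3 4 5, doubleTransposition 1 3 2 4, doubleTransposition 0 3 1 5])
      (by simp) (by decide +kernel) (by decide +kernel) j
    exact ⟨l, hl, hlen, hlift.trans_ne (by decide +kernel)⟩
  · obtain ⟨l, hl, hlen, hlift⟩ := exists_isNielsen_of_subset (w := generatingWord ++
      [doubleTransposition 2 3 4 5, doubleTransposition 2 4 3 5, doubleTransposition 1 3 2 4,
        doubleTransposition 0 3 2 4])
      (by simp) (by decide +kernel) (by decide +kernel) j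
    exact ⟨l, hl, hlen, hlift.trans_ne (by decide +kernel)⟩

end Existence

section Tuples

theorem exists_ofFn_eq {α : Type*} {k : ℕ} {l : List α} (hl : l.length = k) :
    ∃ g : Fin k → α, List.ofFn g = l :=
  ⟨fun i => l[i], by subst hl; simp⟩

theorem ofFn_eq_take_append_drop {α : Type*} {k : ℕ} (g : Fin k → α) {i : ℕ} (hi : i + 1 < k) :
    List.ofFn g = (List.ofFn g).take i ++
      g ⟨i, Nat.lt_of_succ_lt hi⟩ :: g ⟨i + 1, hi⟩ :: (List.ofFn g).drop (i + 2) := by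
  have hdrop {j} (hj : j < k) : g ⟨j, hj⟩ :: (List.ofFn g).drop (j + 1) = (List.ofFn g).drop j := by
    simp [List.drop_eq_getElem_cons (i := j) (l := List.ofFn g) (by simpa)]
  rw [hdrop hi, hdrop, List.take_append_drop]

theorem HurwitzMove.hurwitzStep {G : Type*} [Group G] {k : ℕ} {g h : Fin k → G}
    (H : HurwitzMove g h) : HurwitzStep (List.ofFn g) (List.ofFn h) := by
  obtain ⟨i, hi, h₁, h₂, hrest⟩ := H
  have htake : (List.ofFn h).take i = (List.ofFn g).take i :=
    List.ext_getElem (by simp) fun j hj _ => by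
      simp only [List.length_take, List.length_ofFn, lt_inf_iff] at hj
      simpa using hrest _ (by simp; omega) (by simp; omega)
  have hdrop : (List.ofFn h).drop (i + 2) = (List.ofFn g).drop (i + 2) :=
    List.ext_getElem (by simp) fun j _ _ => by
      simpa using hrest _ (by simp; omega) (by simp; omega)
  rw [ofFn_eq_take_append_drop g hi, ofFn_eq_take_append_drop h hi, htake, hdrop, h₁, h₂]
  exact .swap _ _ _ _

theorem HurwitzStep.hurwitzMove {G : Type*} [Group G] {k : ℕ} {g h : Fin k → G}
    (H : HurwitzStep (List.ofFn g) (List.ofFn h)) : HurwitzMove g h := by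
  have some_apply (f : Fin k → G) (j : Fin k) : some (f j) = (List.ofFn f)[(j : ℕ)]? := by simp
  have hlen : (List.ofFn g).length = k := List.length_ofFn
  generalize hl : List.ofFn g = l at H hlen
  generalize hm : List.ofFn h = m at H
  obtain ⟨u, a, b, v⟩ := H
  simp only [List.length_append, List.length_cons] at hlen
  have hga : g ⟨u.length, by omega⟩ = a := Option.some_injective _ (by simp [some_apply, hl])
  have hgb : g ⟨u.length + 1, by omega⟩ = b := Option.some_injective _ (by simp [some_apply, hl])
  have hha : h ⟨u.length, by omega⟩ = b := Option.some_injective _ (by simp [some_apply, hm])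
  have hhb : h ⟨u.length + 1, by omega⟩ = b⁻¹ * a * b :=
    Option.some_injective _ (by simp [some_apply, hm])
  refine ⟨u.length, by omega, by rw [hha, hgb], by rw [hhb, hga, hgb], fun j hj hj' => ?_⟩
  apply Option.some_injective
  rw [some_apply, some_apply, hl, hm]
  grind

theorem mem_nielsenSet_iff {k : ℕ} {g : Fin k → Equiv.Perm (Fin 6)} :
    g ∈ NielsenSet k ↔ IsNielsen (List.ofFn g) := by
  have hrange : {c | c ∈ List.ofFn g} = Set.range g := by ext; simp [List.mem_ofFn]
  refine ⟨fun ⟨halt, hord, hprod, hgen⟩ => ⟨?_, hprod, hrange ▸ hgen⟩, fun hg =>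
    ⟨fun i => ?_, fun i => ?_, hg.prod_eq_one, hrange ▸ hg.closure_eq⟩⟩
  · simpa [List.forall_mem_ofFn_iff, mem_doubleTranspositions] using fun i => ⟨halt i, hord i⟩
  · exact (mem_doubleTranspositions.1 (hg.mem (g i) (List.mem_ofFn.2 ⟨i, rfl⟩))).1
  · exact (mem_doubleTranspositions.1 (hg.mem (g i) (List.mem_ofFn.2 ⟨i, rfl⟩))).2

theorem HurwitzListEquiv.eqvGen_absRel {k : ℕ} {l m : List (Equiv.Perm (Fin 6))}
    (h : HurwitzListEquiv l m) {g g' : Fin k → Equiv.Perm (Fin 6)} (hg : List.ofFn g = l)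
    (hg' : List.ofFn g' = m) : Relation.EqvGen (AbsRel k) g g' := by
  induction h generalizing g g' with
  | rel _ _ h =>
    subst hg hg'
    exact .rel _ _ (.inl (h.hurwitzMove))
  | refl =>
    rw [List.ofFn_injective (hg.trans hg'.symm)]
    exact .refl _
  | symm _ _ _ ih => exact .symm _ _ (ih hg' hg)
  | trans _ _ _ h _ ih₁ ih₂ =>
    obtain ⟨f, hf⟩ := exists_ofFn_eq (k := k)
      ((HurwitzListEquiv.length_eq h).symm.trans (by simp [← hg]))
    exact .trans _ _ _ (ih₁ hg hf) (ih₂ hf hg')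

theorem elationProd_ofFn_eq_one_iff_of_eqvGen {k : ℕ} {g h : Fin k → Equiv.Perm (Fin 6)}
    (H : Relation.EqvGen (AbsRel k) g h) :
    (∀ i, g i ∈ doubleTranspositions) ∧ elationProd (List.ofFn g) = 1 ↔
      (∀ i, h i ∈ doubleTranspositions) ∧ elationProd (List.ofFn h) = 1 := by
  induction H with
  | refl => rfl
  | symm _ _ _ ih => exact ih.symm
  | trans _ _ _ _ _ ih₁ ih₂ => exact ih₁.trans ih₂
  | rel g h H =>
    obtain H | ⟨s, rfl⟩ := H
    · have hequiv : HurwitzListEquiv (List.ofFn g) (List.ofFn h) := .rel _ _ H.hurwitzStep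
      simp only [← List.forall_mem_ofFn_iff (P := (· ∈ doubleTranspositions))]
      exact ⟨fun ⟨hg, hone⟩ => ⟨hequiv.forall_mem_doubleTranspositions hg,
          (hequiv.elationProd_eq hg).symm.trans hone⟩,
        fun ⟨hh, hone⟩ => ⟨hequiv.symm.forall_mem_doubleTranspositions hh,
          (hequiv.symm.elationProd_eq hh).symm.trans hone⟩⟩
    · simp only [conj_inv_mem_doubleTranspositions_iff]
      refine and_congr_right fun hg => ?_
      have := elationProd_map_conj_eq_one_iff (List.forall_mem_ofFn_iff.2 hg) s⁻¹
      simpa [List.map_ofFn, Function.comp_def] using this.symm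

theorem IsNielsen.eqvGen_absRel {k : ℕ} {g h : Fin k → Equiv.Perm (Fin 6)}
    (hg : IsNielsen (List.ofFn g)) (hh : IsNielsen (List.ofFn h))
    (hone : elationProd (List.ofFn g) = 1 ↔ elationProd (List.ofFn h) = 1) :
    Relation.EqvGen (AbsRel k) g h := by
  obtain ⟨s, hs⟩ := hg.exists_hurwitzListEquiv_map_conj hh (by simp) hone
  refine .trans _ _ _ (.rel _ _ (.inr ⟨s⁻¹, rfl⟩)) (hs.eqvGen_absRel ?_ rfl)
  simp [List.map_ofFn, Function.comp_def]

end Tuples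

/-- For every `k ≥ 6`, the quotient of `Ni(A₆, C_{2×2}^k)` by the equivalence
relation generated by Hurwitz moves and simultaneous `S₆`-conjugation has
exactly two equivalence classes. -/
theorem stmt_0 (k : ℕ) (hk : 6 ≤ k) :
    Nat.card (Quotient ((Relation.EqvGen.setoid (AbsRel k)).comap
      (Subtype.val : ↥(NielsenSet k) → (Fin k → Equiv.Perm (Fin 6))))) = 2 := by
  obtain ⟨_, hu, hulen, huone⟩ := exists_isNielsen_elationProd_eq_one hk
  obtain ⟨_, hv, hvlen, hvone⟩ := exists_isNielsen_elationProd_ne_one hk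
  obtain ⟨u, rfl⟩ := exists_ofFn_eq hulen
  obtain ⟨v, rfl⟩ := exists_ofFn_eq hvlen
  refine (Nat.card_eq_two_iff).2 ⟨⟦⟨u, mem_nielsenSet_iff.2 hu⟩⟧, ⟦⟨v, mem_nielsenSet_iff.2 hv⟩⟧,
    fun huv => hvone ?_, Set.eq_univ_of_forall (Quotient.ind fun ⟨g, hg⟩ => ?_)⟩
  · have huv : Relation.EqvGen (AbsRel k) u v := Quotient.exact huv
    exact ((elationProd_ofFn_eq_one_iff_of_eqvGen huv).1
      ⟨List.forall_mem_ofFn_iff.1 hu.mem, huone⟩).2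
  · have hg' := mem_nielsenSet_iff.1 hg
    by_cases hone : elationProd (List.ofFn g) = 1
    · exact .inl (Quotient.sound (hg'.eqvGen_absRel hu (iff_of_true hone huone)))
    · exact .inr (Quotient.sound (hg'.eqvGen_absRel hv (iff_of_false hone hvone)))
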